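/- arXiv:1305.2612 — 3 statements merged into one kernel-verified Lean document; each statement's English description precedes it below -/
import Mathlib

section
/- Let Γ be a countable group and let μ be a symmetric probability measure on Γ whose support generates Γ. Then there exists an isometric linear section σ : H_b^2(Γ) → Zℓ^∞(Γ³)^Γ of the canonical projection from Γ-invariant bounded 2-cocycles onto the second bounded cohomology H_b^2(Γ); moreover σ takes values in the Γ-invariant alternating μ-pluriharmonic cocycles. -/
noncomputable section

namespace GrpBC

/-- The sup-"norm" of a real valued function (the infimum of its bounds). -/
def supN {S : Type*} (f : S → ℝ) : ℝ := sInf {C : ℝ | 0 ≤ C ∧ ∀ s, |f s| ≤ C}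

/-- A group is amenable if it admits a left-invariant finitely additive
probability measure defined on all subsets. -/
def IsAmenable (G : Type*) [Group G] : Prop :=
  ∃ m : Set G → ℝ, (∀ A, 0 ≤ m A) ∧ m Set.univ = 1 ∧
    (∀ A B, Disjoint A B → m (A ∪ B) = m A + m B) ∧
    (∀ (g : G) (A : Set G), m ((g * ·) '' A) = m A)

/-- An amenable `Γ`-set: a (nonempty) set on which `Γ` acts with amenable stabilizers. -/
def IsAmenableAction (Γ : Type*) [Group Γ] (S : Type*) [MulAction Γ S] : Prop :=
  Nonempty S ∧ ∀ s : S, IsAmenable (MulAction.stabilizer Γ s)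

/-- The homogeneous coboundary operator on functions on `S^{n+1}`. -/
def gcob (S : Type*) (n : ℕ) : ((Fin (n + 1) → S) → ℝ) →ₗ[ℝ] ((Fin (n + 2) → S) → ℝ) where
  toFun f := fun g => ∑ i : Fin (n + 2), ((-1 : ℝ) ^ (i : ℕ)) * f (g ∘ i.succAbove)
  map_add' f g := by
    funext τ
    simp [mul_add, Finset.sum_add_distrib]
  map_smul' r f := by
    funext τ
    simp [Finset.mul_sum]
    congr 1
    funext i
    ring

/-- Bounded functions on `S^{n+1}` (the module `ℓ^∞(S^{n+1})`). -/
def bddF (S : Type*) (n : ℕ) : Submodule ℝ ((Fin (n + 1) → S) → ℝ) where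
  carrier := {f | ∃ C, ∀ g, |f g| ≤ C}
  zero_mem' := ⟨0, fun g => by simp⟩
  add_mem' := by
    rintro f g ⟨C, hC⟩ ⟨D, hD⟩
    exact ⟨C + D, fun τ => (abs_add_le _ _).trans (add_le_add (hC τ) (hD τ))⟩
  smul_mem' := by
    rintro r f ⟨C, hC⟩
    refine ⟨|r| * C, fun τ => ?_⟩
    calc |(r • f) τ| = |r| * |f τ| := by rw [Pi.smul_apply, smul_eq_mul, abs_mul]
    _ ≤ |r| * C := mul_le_mul_of_nonneg_left (hC τ) (abs_nonneg r)

/-- Alternating functions on `S^{n+1}`: they transform under permutations of the arguments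
according to the sign of the permutation. -/
def altF (S : Type*) (n : ℕ) : Submodule ℝ ((Fin (n + 1) → S) → ℝ) where
  carrier := {f | ∀ (g : Fin (n + 1) → S) (π : Equiv.Perm (Fin (n + 1))),
    f (g ∘ π) = ((Equiv.Perm.sign π : ℤ) : ℝ) * f g}
  zero_mem' := fun g π => by simp
  add_mem' := by
    intro f g hf hg τ π
    simp only [Pi.add_apply, hf τ π, hg τ π]
    ring
  smul_mem' := by
    intro r f hf τ π
    simp only [Pi.smul_apply, hf τ π, smul_eq_mul]
    ring

/-- `Γ`-invariant functions on `S^{n+1}` (for the diagonal action). -/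
def invF (Γ : Type*) [Group Γ] (S : Type*) [MulAction Γ S] (n : ℕ) :
    Submodule ℝ ((Fin (n + 1) → S) → ℝ) where
  carrier := {f | ∀ (γ : Γ) (g : Fin (n + 1) → S), f (fun i => γ • g i) = f g}
  zero_mem' := fun γ g => rfl
  add_mem' := by
    intro f g hf hg γ τ
    simp [Pi.add_apply, hf γ τ, hg γ τ]
  smul_mem' := by
    intro r f hf γ τ
    simp [Pi.smul_apply, hf γ τ]

variable (Γ : Type*) [Group Γ]

/-- Invariant bounded cochains of the homogeneous resolution of `Γ`. -/
def grpC (n : ℕ) : Submodule ℝ ((Fin (n + 1) → Γ) → ℝ) := bddF Γ n ⊓ invF Γ Γ n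

/-- Invariant bounded cocycles. -/
def grpZ (n : ℕ) : Submodule ℝ ((Fin (n + 1) → Γ) → ℝ) :=
  grpC Γ n ⊓ LinearMap.ker (gcob Γ n)

/-- Invariant bounded coboundaries. -/
def grpB : ∀ n : ℕ, Submodule ℝ ((Fin (n + 1) → Γ) → ℝ)
  | 0 => ⊥
  | (m + 1) => (grpC Γ m).map (gcob Γ m)

/-- The bounded cohomology `H_b^n(Γ)` of `Γ` with trivial real coefficients. -/
def Hb (n : ℕ) := grpZ Γ n ⧸ ((grpB Γ n).comap (grpZ Γ n).subtype)

instance (n : ℕ) : AddCommGroup (Hb Γ n) := Submodule.Quotient.addCommGroup _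
instance (n : ℕ) : Module ℝ (Hb Γ n) := Submodule.Quotient.module _

variable {Γ}

/-- The class of an invariant bounded cocycle in bounded cohomology. -/
def HbClass {n : ℕ} (f : grpZ Γ n) : Hb Γ n := Submodule.Quotient.mk f

/-- The canonical `ℓ^∞`-seminorm on bounded cohomology. -/
def hbNorm {n : ℕ} (φ : Hb Γ n) : ℝ :=
  sInf {r : ℝ | ∃ f : grpZ Γ n, HbClass f = φ ∧ r = supN f.1}

/-! ### Restriction maps -/

variable {Γ₁ : Type*} [Group Γ₁]

/-- Pullback of homogeneous cochains along a group homomorphism. -/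
def pbG (φ : Γ₁ →* Γ) (n : ℕ) : ((Fin (n + 1) → Γ) → ℝ) →ₗ[ℝ] ((Fin (n + 1) → Γ₁) → ℝ) where
  toFun f := fun g => f (fun i => φ (g i))
  map_add' f g := rfl
  map_smul' r f := rfl

lemma pbG_mem_grpZ (φ : Γ₁ →* Γ) (n : ℕ) {f : (Fin (n + 1) → Γ) → ℝ}
    (hf : f ∈ grpZ Γ n) : pbG φ n f ∈ grpZ Γ₁ n := by
  obtain ⟨⟨⟨C, hC⟩, hinv⟩, hker⟩ := hf
  refine ⟨⟨⟨C, fun g => hC _⟩, fun γ g => ?_⟩, ?_⟩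
  · show f (fun i => φ (γ * g i)) = f (fun i => φ (g i))
    have : (fun i => φ (γ * g i)) = fun i => φ γ • φ (g i) := by
      funext i
      simp [smul_eq_mul]
    rw [this]
    exact hinv (φ γ) (fun i => φ (g i))
  · have h0 : gcob Γ n f = 0 := hker
    show gcob Γ₁ n (pbG φ n f) = 0
    funext g
    have : gcob Γ₁ n (pbG φ n f) g = gcob Γ n f (fun i => φ (g i)) := by
      show (∑ i : Fin (n + 2), ((-1 : ℝ) ^ (i : ℕ)) * f (fun j => φ ((g ∘ i.succAbove) j)))
        = ∑ i : Fin (n + 2), ((-1 : ℝ) ^ (i : ℕ)) * f ((fun j => φ (g j)) ∘ i.succAbove)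
      rfl
    rw [this, h0]
    rfl

lemma pbG_mem_grpB (φ : Γ₁ →* Γ) (n : ℕ) {f : (Fin (n + 1) → Γ) → ℝ}
    (hf : f ∈ grpB Γ n) : pbG φ n f ∈ grpB Γ₁ n := by
  cases n with
  | zero =>
    have : f = 0 := hf
    simp [this, grpB]
  | succ m =>
    obtain ⟨u, ⟨⟨C, hC⟩, hinv⟩, rfl⟩ := hf
    refine ⟨pbG φ m u, ⟨⟨C, fun g => hC _⟩, fun γ g => ?_⟩, ?_⟩
    · show u (fun i => φ (γ * g i)) = u (fun i => φ (g i))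
      have : (fun i => φ (γ * g i)) = fun i => φ γ • φ (g i) := by
        funext i
        simp [smul_eq_mul]
      rw [this]
      exact hinv (φ γ) (fun i => φ (g i))
    · rfl

/-- The restriction map `H_b^n(Γ) → H_b^n(Γ₁)` induced by a group homomorphism
`Γ₁ → Γ`. -/
def hbRes (φ : Γ₁ →* Γ) (n : ℕ) : Hb Γ n →ₗ[ℝ] Hb Γ₁ n :=
  Submodule.mapQ _ _ ((pbG φ n).restrict (fun f hf => pbG_mem_grpZ φ n hf))
    (fun f hf => pbG_mem_grpB φ n hf)



/-! ### The complex of alternating bounded functions on a `Γ`-set -/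

variable (Γ : Type*) [Group Γ] (S : Type*) [MulAction Γ S]

/-- Invariant alternating bounded cochains on `S^{n+1}`:
`ℓ^∞_alt(S^{n+1})^Γ`. -/
def altC (n : ℕ) : Submodule ℝ ((Fin (n + 1) → S) → ℝ) :=
  (bddF S n ⊓ altF S n) ⊓ invF Γ S n

/-- Invariant alternating bounded cocycles `Zℓ^∞_alt(S^{n+1})^Γ`. -/
def ZS (n : ℕ) : Submodule ℝ ((Fin (n + 1) → S) → ℝ) :=
  altC Γ S n ⊓ LinearMap.ker (gcob S n)

/-- Coboundaries in the invariant alternating bounded complex. -/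
def BS : ∀ n : ℕ, Submodule ℝ ((Fin (n + 1) → S) → ℝ)
  | 0 => ⊥
  | (m + 1) => (altC Γ S m).map (gcob S m)

/-- The cohomology of the complex `ℓ^∞_alt(S^{•+1})^Γ`. -/
def HS (n : ℕ) := ZS Γ S n ⧸ ((BS Γ S n).comap (ZS Γ S n).subtype)

instance (n : ℕ) : AddCommGroup (HS Γ S n) := Submodule.Quotient.addCommGroup _
instance (n : ℕ) : Module ℝ (HS Γ S n) := Submodule.Quotient.module _

variable {Γ S}

/-- The class of a cocycle in the cohomology of `ℓ^∞_alt(S^{•+1})^Γ`. -/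
def HSClass {n : ℕ} (f : ZS Γ S n) : HS Γ S n := Submodule.Quotient.mk f

/-- The `ℓ^∞`-seminorm on the cohomology of `ℓ^∞_alt(S^{•+1})^Γ`. -/
def hsNorm {n : ℕ} (φ : HS Γ S n) : ℝ :=
  sInf {r : ℝ | ∃ f : ZS Γ S n, HSClass f = φ ∧ r = supN f.1}

/-- Pullback of cochains along the orbit map `g ↦ g • s₀`. -/
def pbOrb (s₀ : S) (n : ℕ) : ((Fin (n + 1) → S) → ℝ) →ₗ[ℝ] ((Fin (n + 1) → Γ) → ℝ) where
  toFun f := fun g => f (fun i => g i • s₀)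
  map_add' f g := rfl
  map_smul' r f := rfl

lemma pbOrb_mem_grpZ (s₀ : S) (n : ℕ) {f : (Fin (n + 1) → S) → ℝ}
    (hf : f ∈ ZS Γ S n) : pbOrb (Γ := Γ) s₀ n f ∈ grpZ Γ n := by
  obtain ⟨⟨⟨⟨C, hC⟩, -⟩, hinv⟩, hker⟩ := hf
  refine ⟨⟨⟨C, fun g => hC _⟩, fun γ g => ?_⟩, ?_⟩
  · show f (fun i => (γ * g i) • s₀) = f (fun i => g i • s₀)
    have : (fun i => (γ * g i) • s₀) = fun i => γ • (g i • s₀) := by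
      funext i
      rw [mul_smul]
    rw [this]
    exact hinv γ (fun i => g i • s₀)
  · have h0 : gcob S n f = 0 := hker
    show gcob Γ n (pbOrb (Γ := Γ) s₀ n f) = 0
    funext g
    have : gcob Γ n (pbOrb (Γ := Γ) s₀ n f) g = gcob S n f (fun i => g i • s₀) := rfl
    rw [this, h0]
    rfl

lemma pbOrb_mem_grpB (s₀ : S) (n : ℕ) {f : (Fin (n + 1) → S) → ℝ}
    (hf : f ∈ BS Γ S n) : pbOrb (Γ := Γ) s₀ n f ∈ grpB Γ n := by
  cases n with
  | zero =>
    have : f = 0 := hf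
    simp [this, grpB]
  | succ m =>
    obtain ⟨u, ⟨⟨⟨C, hC⟩, -⟩, hinv⟩, rfl⟩ := hf
    refine ⟨pbOrb (Γ := Γ) s₀ m u, ⟨⟨C, fun g => hC _⟩, fun γ g => ?_⟩, ?_⟩
    · show u (fun i => (γ * g i) • s₀) = u (fun i => g i • s₀)
      have : (fun i => (γ * g i) • s₀) = fun i => γ • (g i • s₀) := by
        funext i
        rw [mul_smul]
      rw [this]
      exact hinv γ (fun i => g i • s₀)
    · rfl

/-- The canonical map `Zℓ^∞_alt(S^{•+1})^Γ → H_b^•(Γ)` (realized by pulling back along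
the orbit map of a point `s₀ ∈ S`; for an amenable action the induced map does not depend
on this choice). -/
def canHb (s₀ : S) (n : ℕ) (f : ZS Γ S n) : Hb Γ n :=
  HbClass ⟨pbOrb (Γ := Γ) s₀ n f.1, pbOrb_mem_grpZ s₀ n f.2⟩

/-- The map `HS → H_b` induced in cohomology by pulling back along an orbit map. -/
def hsToHb (s₀ : S) (n : ℕ) : HS Γ S n →ₗ[ℝ] Hb Γ n :=
  Submodule.mapQ _ _ ((pbOrb (Γ := Γ) s₀ n).restrict (fun f hf => pbOrb_mem_grpZ s₀ n hf))
    (fun f hf => pbOrb_mem_grpB s₀ n hf)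

/-- `μ` is a symmetric probability measure on the countable group `Γ` whose support
generates `Γ`. -/
def IsSymmGenProb (Γ : Type*) [Group Γ] (μ : Γ → ℝ) : Prop :=
  (∀ g, 0 ≤ μ g) ∧ (∀ g, μ g⁻¹ = μ g) ∧ Summable μ ∧ (∑' g, μ g) = 1 ∧
    Subgroup.closure {g | μ g ≠ 0} = ⊤

/-- A bounded function on `Γ^{n+1}` is `μ`-pluriharmonic if it is invariant under
averaging each variable with respect to `μ`. -/
def IsPluriharmonic {Γ : Type*} [Group Γ] (μ : Γ → ℝ) {n : ℕ}
    (f : (Fin (n + 1) → Γ) → ℝ) : Prop :=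
  ∀ g : Fin (n + 1) → Γ,
    f g = ∑' γ : Fin (n + 1) → Γ, (∏ i, μ (γ i)) * f (fun i => g i * (γ i)⁻¹)

/-! ### Averages against probability weights -/

/-- Probability weights. -/
structure IsPw {α : Type} (w : α → ℝ) : Prop where
  nn : ∀ a, 0 ≤ w a
  hs : HasSum w 1

/-- Average of a function against weights. -/
def Av {α : Type} (w : α → ℝ) (f : α → ℝ) : ℝ := ∑' a, w a * f a

lemma Av_summable {α : Type} {w : α → ℝ} (hw : IsPw w) {f : α → ℝ} {C : ℝ}
    (hf : ∀ a, |f a| ≤ C) : Summable (fun a => w a * f a) := by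
  refine Summable.of_norm_bounded (hw.hs.summable.mul_right C) (fun a => ?_)
  rw [Real.norm_eq_abs, abs_mul, abs_of_nonneg (hw.nn a)]
  exact mul_le_mul_of_nonneg_left (hf a) (hw.nn a)

lemma Av_const {α : Type} {w : α → ℝ} (hw : IsPw w) (c : ℝ) : Av w (fun _ => c) = c := by
  unfold Av
  rw [tsum_mul_right, hw.hs.tsum_eq, one_mul]

lemma Av_add {α : Type} {w : α → ℝ} (hw : IsPw w) {f g : α → ℝ} {C D : ℝ}
    (hf : ∀ a, |f a| ≤ C) (hg : ∀ a, |g a| ≤ D) :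
    Av w (fun a => f a + g a) = Av w f + Av w g := by
  unfold Av
  rw [← (Av_summable hw hf).tsum_add (Av_summable hw hg)]
  simp only [mul_add]

lemma Av_sub {α : Type} {w : α → ℝ} (hw : IsPw w) {f g : α → ℝ} {C D : ℝ}
    (hf : ∀ a, |f a| ≤ C) (hg : ∀ a, |g a| ≤ D) :
    Av w (fun a => f a - g a) = Av w f - Av w g := by
  unfold Av
  rw [← (Av_summable hw hf).tsum_sub (Av_summable hw hg)]
  simp only [mul_sub]

lemma Av_smul {α : Type} (w : α → ℝ) (r : ℝ) (f : α → ℝ) :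
    Av w (fun a => r * f a) = r * Av w f := by
  unfold Av
  rw [← tsum_mul_left]
  congr 1; funext a; ring

lemma Av_mono {α : Type} {w : α → ℝ} (hw : IsPw w) {f g : α → ℝ} {C D : ℝ}
    (hf : ∀ a, |f a| ≤ C) (hg : ∀ a, |g a| ≤ D) (h : ∀ a, f a ≤ g a) : Av w f ≤ Av w g :=
  (Av_summable hw hf).tsum_le_tsum (fun a => mul_le_mul_of_nonneg_left (h a) (hw.nn a))
    (Av_summable hw hg)

lemma Av_nonneg {α : Type} {w : α → ℝ} (hw : IsPw w) {f : α → ℝ} (h : ∀ a, 0 ≤ f a) :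
    0 ≤ Av w f := tsum_nonneg (fun a => mul_nonneg (hw.nn a) (h a))

lemma Av_abs_le {α : Type} {w : α → ℝ} (hw : IsPw w) {f : α → ℝ} {C : ℝ}
    (hf : ∀ a, |f a| ≤ C) : |Av w f| ≤ C := by
  have hC : ∀ a : α, |C| ≤ |C| := fun a => le_rfl
  have hC' : ∀ a : α, |-C| ≤ |-C| := fun a => le_rfl
  rw [abs_le]
  constructor
  · have := Av_mono hw hC' hf (fun a => (abs_le.1 (hf a)).1)
    rwa [Av_const hw] at this
  · have := Av_mono hw hf hC (fun a => (abs_le.1 (hf a)).2)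
    rwa [Av_const hw] at this

lemma Av_eq_zero {α : Type} {w : α → ℝ} (hw : IsPw w) {f : α → ℝ} {C : ℝ}
    (hf : ∀ a, |f a| ≤ C) (h : ∀ a, 0 ≤ f a) (h0 : Av w f = 0) (a : α) (ha : w a ≠ 0) :
    f a = 0 := by
  have hs := Av_summable hw hf
  have h1 : HasSum (fun a => w a * f a) 0 := by
    have := hs.hasSum
    rwa [show ∑' a, w a * f a = 0 from h0] at this
  have h2 := (hasSum_zero_iff_of_nonneg (fun a => mul_nonneg (hw.nn a) (h a))).1 h1
  have h3 : w a * f a = 0 := congrFun h2 a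
  exact (mul_eq_zero.1 h3).resolve_left ha

lemma pair_summable {α β : Type} {w : α → ℝ} {v : β → ℝ} (hw : IsPw w) (hv : IsPw v)
    {F : α → β → ℝ} {C : ℝ} (hF : ∀ a b, |F a b| ≤ C) :
    Summable (fun p : α × β => w p.1 * (v p.2 * F p.1 p.2)) := by
  have h := (hw.hs.summable.mul_of_nonneg hv.hs.summable hw.nn hv.nn).mul_right C
  refine Summable.of_norm_bounded h (fun p => ?_)
  rw [Real.norm_eq_abs, abs_mul, abs_mul, abs_of_nonneg (hw.nn _), abs_of_nonneg (hv.nn _),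
    ← mul_assoc]
  exact mul_le_mul_of_nonneg_left (hF _ _) (mul_nonneg (hw.nn _) (hv.nn _))

lemma Av_swap {α β : Type} {w : α → ℝ} {v : β → ℝ} (hw : IsPw w) (hv : IsPw v)
    {F : α → β → ℝ} {C : ℝ} (hF : ∀ a b, |F a b| ≤ C) :
    Av w (fun a => Av v (fun b => F a b)) = Av v (fun b => Av w (fun a => F a b)) := by
  unfold Av
  simp only [← tsum_mul_left]
  rw [← Summable.tsum_comm (f := fun a b => w a * (v b * F a b)) (pair_summable hw hv hF)]
  congr 1; funext b; congr 1; funext a; ring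

lemma Av_tendsto {α ι : Type} {w : α → ℝ} (hw : IsPw w) {l : Filter ι} {f : ι → α → ℝ}
    {g : α → ℝ} {C : ℝ} (hf : ∀ i a, |f i a| ≤ C)
    (h : ∀ a, Filter.Tendsto (fun i => f i a) l (nhds (g a))) :
    Filter.Tendsto (fun i => Av w (f i)) l (nhds (Av w g)) := by
  unfold Av
  refine tendsto_tsum_of_dominated_convergence (bound := fun a => w a * C)
    (hw.hs.summable.mul_right C) (fun a => (h a).const_mul _) (Filter.Eventually.of_forall ?_)
  intro i a
  rw [Real.norm_eq_abs, abs_mul, abs_of_nonneg (hw.nn a)]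
  exact mul_le_mul_of_nonneg_left (hf i a) (hw.nn a)

/-! ### Convolution -/

/-- Convolution of weights. -/
def cv {G : Type} [Group G] (w v : G → ℝ) : G → ℝ := fun x => ∑' s, w s * v (s⁻¹ * x)

lemma cv_aux {G : Type} [Group G] {w v : G → ℝ} (hw : IsPw w) (hv : IsPw v)
    {f : G → ℝ} {C : ℝ} (hf : ∀ a, |f a| ≤ C) :
    Summable (fun p : G × G => w p.1 * (v (p.1⁻¹ * p.2) * f p.2)) := by
  let e : G × G ≃ G × G :=
    { toFun := fun p => (p.1, p.1⁻¹ * p.2)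
      invFun := fun p => (p.1, p.1 * p.2)
      left_inv := fun p => by simp
      right_inv := fun p => by simp }
  have h := pair_summable hw hv (F := fun a b => f (a * b)) (fun a b => hf _)
  have h2 := e.summable_iff.2 h
  convert h2 using 2 with p
  simp [e]

lemma cv_Av {G : Type} [Group G] {w v : G → ℝ} (hw : IsPw w) (hv : IsPw v)
    {f : G → ℝ} {C : ℝ} (hf : ∀ a, |f a| ≤ C) :
    Av (cv w v) f = Av w (fun s => Av v (fun a => f (s * a))) := by
  unfold Av cv
  have h1 : ∀ x, (∑' s, w s * v (s⁻¹ * x)) * f x = ∑' s, w s * (v (s⁻¹ * x) * f x) := by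
    intro x
    rw [← tsum_mul_right]
    congr 1; funext s; ring
  simp only [h1]
  rw [Summable.tsum_comm (f := fun s x => w s * (v (s⁻¹ * x) * f x)) (cv_aux hw hv hf)]
  congr 1; funext s
  rw [tsum_mul_left]
  congr 1
  rw [← (Equiv.mulLeft s).tsum_eq]
  simp

lemma cv_pw {G : Type} [Group G] {w v : G → ℝ} (hw : IsPw w) (hv : IsPw v) : IsPw (cv w v) := by
  refine ⟨fun x => tsum_nonneg (fun s => mul_nonneg (hw.nn _) (hv.nn _)), ?_⟩
  have h1 : ∀ a : G, |(fun _ : G => (1 : ℝ)) a| ≤ 1 := by simp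
  have h := cv_Av hw hv h1
  simp only [Av_const hv, Av_const hw] at h
  unfold Av at h
  simp only [mul_one] at h
  have hs : Summable (cv w v) := by
    by_contra hn
    rw [tsum_eq_zero_of_not_summable hn] at h
    exact zero_ne_one h
  rw [← h]
  exact hs.hasSum

/-- Convolution powers. -/
def cpow {G : Type} [Group G] (w : G → ℝ) : ℕ → G → ℝ
  | 0 => w
  | (k + 1) => cv w (cpow w k)

lemma cpow_pw {G : Type} [Group G] {w : G → ℝ} (hw : IsPw w) (k : ℕ) : IsPw (cpow w k) := by
  induction k with
  | zero => exact hw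
  | succ k ih => exact cv_pw hw ih

/-- Cesàro means of convolution powers. -/
def ces {G : Type} [Group G] (w : G → ℝ) (N : ℕ) : G → ℝ :=
  fun x => ((N : ℝ) + 1)⁻¹ * ∑ k ∈ Finset.range (N + 1), cpow w k x

lemma ces_Av {G : Type} [Group G] {w : G → ℝ} (hw : IsPw w) (N : ℕ) {f : G → ℝ} {C : ℝ}
    (hf : ∀ a, |f a| ≤ C) :
    Av (ces w N) f = ((N : ℝ) + 1)⁻¹ * ∑ k ∈ Finset.range (N + 1), Av (cpow w k) f := by
  unfold Av ces
  rw [← Summable.tsum_finsetSum (fun k _ => Av_summable (cpow_pw hw k) hf), ← tsum_mul_left]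
  congr 1; funext a
  rw [mul_assoc, Finset.sum_mul]

lemma ces_pw {G : Type} [Group G] {w : G → ℝ} (hw : IsPw w) (N : ℕ) : IsPw (ces w N) := by
  have hN : (0 : ℝ) < (N : ℝ) + 1 := by positivity
  refine ⟨fun x => mul_nonneg (by positivity)
    (Finset.sum_nonneg fun k _ => (cpow_pw hw k).nn x), ?_⟩
  have h := (hasSum_sum (fun k (_ : k ∈ Finset.range (N + 1)) => (cpow_pw hw k).hs)).mul_left
    ((N : ℝ) + 1)⁻¹
  simp only [Finset.sum_const, Finset.card_range, nsmul_eq_mul, mul_one] at h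
  push_cast at h
  rw [inv_mul_cancel₀ hN.ne'] at h
  exact h

lemma ces_shift {G : Type} [Group G] {w : G → ℝ} (hw : IsPw w) (N : ℕ) {f : G → ℝ} {C : ℝ}
    (hf : ∀ a, |f a| ≤ C) :
    |Av w (fun s => Av (ces w N) (fun a => f (s * a))) - Av (ces w N) f|
      ≤ 2 * C * ((N : ℝ) + 1)⁻¹ := by
  have hN : (0 : ℝ) < (N : ℝ) + 1 := by positivity
  have h1 : Av w (fun s => Av (ces w N) (fun a => f (s * a)))
      = ((N : ℝ) + 1)⁻¹ * ∑ k ∈ Finset.range (N + 1), Av (cpow w (k + 1)) f := by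
    rw [← cv_Av hw (ces_pw hw N) hf]
    have e : cv w (ces w N) = fun x => ((N : ℝ) + 1)⁻¹ *
        ∑ k ∈ Finset.range (N + 1), cpow w (k + 1) x := by
      funext x
      unfold ces
      show ∑' s, w s * (_ * ∑ k ∈ _, cpow w k (s⁻¹ * x)) = _ * ∑ k ∈ _, ∑' s, _
      rw [← Summable.tsum_finsetSum, ← tsum_mul_left]
      · congr 1; funext s
        rw [← mul_assoc, mul_comm (w s), mul_assoc, Finset.mul_sum]
      · intro k _
        refine Av_summable (C := 1) hw (fun s => ?_)
        rw [abs_of_nonneg ((cpow_pw hw k).nn _)]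
        exact le_hasSum (cpow_pw hw k).hs _ (fun b _ => (cpow_pw hw k).nn b)
    rw [e]
    unfold Av
    rw [← Summable.tsum_finsetSum (fun k _ => Av_summable (cpow_pw hw (k + 1)) hf),
      ← tsum_mul_left]
    congr 1; funext a
    rw [mul_assoc, Finset.sum_mul]
  rw [h1, ces_Av hw N hf, ← mul_sub, ← Finset.sum_sub_distrib,
    Finset.sum_range_sub (fun k => Av (cpow w k) f), abs_mul, abs_of_pos (inv_pos.2 hN), mul_comm]
  refine mul_le_mul_of_nonneg_right ?_ (inv_pos.2 hN).le
  have a1 := Av_abs_le (cpow_pw hw (N + 1)) hf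
  have a2 := Av_abs_le (cpow_pw hw 0) hf
  rw [abs_le] at *
  constructor <;> linarith [a1.1, a1.2, a2.1, a2.2]

/-! ### Ultralimits -/

/-- Limit of a bounded sequence along a fixed ultrafilter. -/
def ulim (u : ℕ → ℝ) : ℝ := (Filter.hyperfilter ℕ : Filter ℕ).limUnder u

lemma ulim_spec {u : ℕ → ℝ} {C : ℝ} (h : ∀ n, |u n| ≤ C) :
    Filter.Tendsto u (Filter.hyperfilter ℕ : Filter ℕ) (nhds (ulim u)) := by
  have h1 : ((Filter.hyperfilter ℕ).map u : Filter ℝ) ≤ Filter.principal (Set.Icc (-C) C) := by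
    rw [Filter.le_principal_iff]
    exact Filter.mem_map.2 (Filter.univ_mem' (fun n => abs_le.1 (h n)))
  obtain ⟨x, -, hx⟩ := (isCompact_Icc (a := -C) (b := C)).ultrafilter_le_nhds _ h1
  exact tendsto_nhds_limUnder ⟨x, hx⟩

lemma ulim_eq {u : ℕ → ℝ} {c : ℝ}
    (h : Filter.Tendsto u (Filter.hyperfilter ℕ : Filter ℕ) (nhds c)) : ulim u = c :=
  h.limUnder_eq

lemma ulim_abs_le {u : ℕ → ℝ} {C : ℝ} (h : ∀ n, |u n| ≤ C) : |ulim u| ≤ C :=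
  le_of_tendsto (ulim_spec h).abs (Filter.Eventually.of_forall h)

/-! ### Biharmonic functions are constant -/

lemma biharm {G : Type} [Group G] {w : G → ℝ} (hw : IsPw w) (hsym : ∀ g, w g⁻¹ = w g)
    (hgen : Subgroup.closure {g | w g ≠ 0} = ⊤) {β : G → ℝ} {C : ℝ} (hβ : ∀ a, |β a| ≤ C)
    (hR : ∀ x, Av w (fun s => β (x * s)) = β x) (hL : ∀ x, Av w (fun s => β (s * x)) = β x) :
    ∀ x, β x = β 1 := by
  let R : (G → ℝ) → G → ℝ := fun f x => Av w (fun s => f (x * s))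
  let L : (G → ℝ) → G → ℝ := fun f x => Av w (fun s => f (s * x))
  have bR : ∀ {f : G → ℝ} {C : ℝ}, (∀ a, |f a| ≤ C) → ∀ a, |R f a| ≤ C :=
    fun h a => Av_abs_le hw (fun s => h _)
  have bL : ∀ {f : G → ℝ} {C : ℝ}, (∀ a, |f a| ≤ C) → ∀ a, |L f a| ≤ C :=
    fun h a => Av_abs_le hw (fun s => h _)
  have bLn : ∀ {f : G → ℝ} {C : ℝ}, (∀ a, |f a| ≤ C) → ∀ n a, |(L^[n] f) a| ≤ C := by
    intro f C h n
    induction n with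
    | zero => exact h
    | succ n ih => rw [Function.iterate_succ_apply']; exact bL ih
  have bRn : ∀ {f : G → ℝ} {C : ℝ}, (∀ a, |f a| ≤ C) → ∀ n a, |(R^[n] f) a| ≤ C := by
    intro f C h n
    induction n with
    | zero => exact h
    | succ n ih => rw [Function.iterate_succ_apply']; exact bR ih
  have comm : ∀ {f : G → ℝ} {C : ℝ}, (∀ a, |f a| ≤ C) → R (L f) = L (R f) := by
    intro f C h
    funext x
    show Av w (fun s => Av w (fun t => f (t * (x * s)))) =
      Av w (fun t => Av w (fun s => f ((t * x) * s)))
    rw [Av_swap hw hw (fun a b => h _)]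
    simp only [mul_assoc]
  have commn : ∀ {f : G → ℝ} {C : ℝ}, (∀ a, |f a| ≤ C) → ∀ n, R^[n] (L f) = L (R^[n] f) := by
    intro f C h n
    induction n with
    | zero => rfl
    | succ n ih => rw [Function.iterate_succ_apply', ih, Function.iterate_succ_apply',
        comm (bRn h n)]
  have LR1 : ∀ n, ∀ {f : G → ℝ} {C : ℝ}, (∀ a, |f a| ≤ C) → (L^[n] f) 1 = (R^[n] f) 1 := by
    intro n
    induction n with
    | zero => intros; rfl
    | succ n ih =>
      intro f C h
      rw [Function.iterate_succ_apply, ih (bL h), commn h, Function.iterate_succ_apply']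
      show Av w (fun s => (R^[n] f) (s * 1)) = Av w (fun s => (R^[n] f) (1 * s))
      simp
  have hsq : ∀ a, |β a ^ 2| ≤ C ^ 2 := fun a => by
    rw [abs_pow]; exact pow_le_pow_left₀ (abs_nonneg _) (hβ a) 2
  let D : G → ℝ := fun x => Av w (fun s => (β (x * s) - β x) ^ 2)
  have hdiff : ∀ x y, |β x - β y| ≤ 2 * C := fun x y => by
    have := hβ x; have := hβ y
    rw [abs_le] at *; constructor <;> linarith
  have hdsq : ∀ x y, |(β x - β y) ^ 2| ≤ (2 * C) ^ 2 := fun x y => by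
    rw [abs_pow]; exact pow_le_pow_left₀ (abs_nonneg _) (hdiff x y) 2
  have bD : ∀ x, |D x| ≤ (2 * C) ^ 2 := fun x => Av_abs_le hw (fun s => hdsq _ _)
  have D0 : ∀ x, 0 ≤ D x := fun x => Av_nonneg hw (fun s => sq_nonneg _)
  -- variance formula
  have hvar : ∀ {f : G → ℝ} {B : ℝ} (c : ℝ), (∀ a, |f a| ≤ B) →
      Av w (fun s => (f s - c) ^ 2) = Av w (fun s => f s ^ 2) - 2 * c * Av w f + c ^ 2 := by
    intro f B c hB
    have hB2 : ∀ a, |f a ^ 2| ≤ B ^ 2 := fun a => by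
      rw [abs_pow]; exact pow_le_pow_left₀ (abs_nonneg _) (hB a) 2
    have e : (fun s => (f s - c) ^ 2) = fun s => (f s ^ 2 - 2 * c * f s) + c ^ 2 := by
      funext s; ring
    have hB3 : ∀ a, |2 * c * f a| ≤ |2 * c| * B := fun a => by
      rw [abs_mul]; exact mul_le_mul_of_nonneg_left (hB a) (abs_nonneg _)
    have hB4 : ∀ a, |f a ^ 2 - 2 * c * f a| ≤ B ^ 2 + |2 * c| * B := fun a =>
      (abs_sub _ _).trans (add_le_add (hB2 a) (hB3 a))
    rw [e, Av_add hw hB4 (fun a => le_refl |c ^ 2|), Av_sub hw hB2 hB3, Av_const hw, Av_smul]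
  have jensen : ∀ {f : G → ℝ} {B : ℝ}, (∀ a, |f a| ≤ B) → (Av w f) ^ 2 ≤ Av w (fun s => f s ^ 2) := by
    intro f B hB
    have h1 := hvar (Av w f) hB
    have h2 : 0 ≤ Av w (fun s => (f s - Av w f) ^ 2) := Av_nonneg hw (fun s => sq_nonneg _)
    nlinarith
  have DR : ∀ x, D x = R (fun y => β y ^ 2) x - β x ^ 2 := by
    intro x
    show Av w (fun s => (β (x * s) - β x) ^ 2) = Av w (fun s => β (x * s) ^ 2) - β x ^ 2
    rw [hvar (β x) (fun s => hβ (x * s)), hR x]; ring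
  have DL : ∀ x, D x ≤ L D x := by
    intro x
    show Av w (fun s => (β (x * s) - β x) ^ 2) ≤
      Av w (fun t => Av w (fun s => (β ((t * x) * s) - β (t * x)) ^ 2))
    rw [Av_swap hw hw (fun a b => hdsq _ _)]
    refine Av_mono hw (fun s => hdsq _ _) (fun s => Av_abs_le hw (fun t => hdsq _ _)) (fun s => ?_)
    have h1 : β (x * s) - β x = Av w (fun t => β (t * x * s) - β (t * x)) := by
      rw [Av_sub hw (fun a => hβ _) (fun a => hβ _), hL x]
      simp only [mul_assoc]
      rw [hL]
    rw [h1]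
    exact jensen (fun t => hdiff _ _)
  have Lmono : ∀ {f g : G → ℝ} {B B' : ℝ}, (∀ a, |f a| ≤ B) → (∀ a, |g a| ≤ B') →
      (∀ x, f x ≤ g x) → ∀ x, L f x ≤ L g x :=
    fun hf hg h x => Av_mono hw (fun s => hf _) (fun s => hg _) (fun s => h _)
  have DLn : ∀ n x, (L^[n] D) x ≤ (L^[n + 1] D) x := by
    intro n
    induction n with
    | zero => exact DL
    | succ n ih =>
      intro x
      rw [Function.iterate_succ_apply', Function.iterate_succ_apply' L (n + 1)]
      exact Lmono (bLn bD n) (bLn bD (n + 1)) ih x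
  have Rsub : ∀ n, (R^[n] D) 1 = (R^[n + 1] (fun y => β y ^ 2)) 1 - (R^[n] (fun y => β y ^ 2)) 1 := by
    have : ∀ n x, (R^[n] D) x =
        (R^[n + 1] (fun y => β y ^ 2)) x - (R^[n] (fun y => β y ^ 2)) x := by
      intro n
      induction n with
      | zero => exact DR
      | succ n ih =>
        intro x
        rw [Function.iterate_succ_apply', Function.iterate_succ_apply' R (n + 1)]
        rw [Function.iterate_succ_apply' R n (fun y => β y ^ 2)]
        rw [Function.iterate_succ_apply' R n (fun y => β y ^ 2)] at ih
        show Av w (fun s => (R^[n] D) (x * s)) = Av w _ - Av w _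
        rw [← Av_sub hw (fun a => bR (bRn hsq n) _) (fun a => bRn hsq n _)]
        congr 1; funext s; exact ih _
    exact fun n => this n 1
  have mono : Monotone (fun n => (L^[n] D) 1) := monotone_nat_of_le_succ (fun n => DLn n 1)
  have Lnn : ∀ n x, 0 ≤ (L^[n] D) x := by
    intro n x
    have : (L^[0] D) x ≤ (L^[n] D) x :=
      monotone_nat_of_le_succ (f := fun n => (L^[n] D) x) (fun n => DLn n x) (Nat.zero_le n)
    exact (D0 x).trans this
  have sumbd : ∀ N, ∑ n ∈ Finset.range N, (L^[n] D) 1 ≤ 2 * C ^ 2 := by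
    intro N
    have : ∀ n, (L^[n] D) 1 =
      (R^[n + 1] (fun y => β y ^ 2)) 1 - (R^[n] (fun y => β y ^ 2)) 1 := fun n => by
      rw [LR1 n bD, Rsub]
    simp only [this]
    rw [Finset.sum_range_sub (fun n => (R^[n] (fun y => β y ^ 2)) 1)]
    have h1 := bRn hsq N 1
    have h2 := bRn hsq 0 1
    rw [abs_le] at h1 h2
    linarith [h1.2, h2.1]
  have zero1 : ∀ n, (L^[n] D) 1 = 0 := by
    intro n
    by_contra hne
    have hpos : 0 < (L^[n] D) 1 := lt_of_le_of_ne (Lnn n 1) (Ne.symm hne)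
    obtain ⟨K, hK⟩ := exists_nat_gt (2 * C ^ 2 / (L^[n] D) 1)
    have h1 := sumbd (n + K)
    rw [Finset.sum_range_add] at h1
    have h2 : (K : ℝ) * (L^[n] D) 1 ≤ ∑ i ∈ Finset.range K, (L^[n + i] D) 1 := by
      have := Finset.card_nsmul_le_sum (Finset.range K) (fun i => (L^[n + i] D) 1) ((L^[n] D) 1)
        (fun i _ => mono (Nat.le_add_right n i))
      simpa using this
    have h3 : 0 ≤ ∑ i ∈ Finset.range n, (L^[i] D) 1 := Finset.sum_nonneg (fun i _ => Lnn i 1)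
    rw [div_lt_iff₀ hpos] at hK
    linarith
  have step : ∀ s, w s ≠ 0 → ∀ y, (∀ n, (L^[n] D) y = 0) → ∀ n, (L^[n] D) (s * y) = 0 := by
    intro s hs y hy n
    have h1 := hy (n + 1)
    rw [Function.iterate_succ_apply'] at h1
    exact Av_eq_zero hw (f := fun s => (L^[n] D) (s * y)) (fun a => bLn bD n _)
      (fun a => Lnn n _) h1 s hs
  have all : ∀ x n, (L^[n] D) x = 0 := by
    intro x
    have hx : x ∈ Subgroup.closure {g | w g ≠ 0} := by rw [hgen]; trivial
    induction hx using Subgroup.closure_induction_left with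
    | one => exact zero1
    | mul_left s hs y hy ih => exact step s hs y ih
    | inv_mul_cancel s hs y hy ih => exact step s⁻¹ (by rw [hsym]; exact hs) y ih
  have fin : ∀ x s, w s ≠ 0 → β (x * s) = β x := by
    intro x s hs
    have h := Av_eq_zero hw (f := fun s => (β (x * s) - β x) ^ 2) (fun a => hdsq _ _)
      (fun a => sq_nonneg _) (all x 0) s hs
    have := pow_eq_zero_iff (two_ne_zero) |>.1 h
    linarith
  intro x
  have hx : x ∈ Subgroup.closure {g | w g ≠ 0} := by rw [hgen]; trivial
  induction hx using Subgroup.closure_induction_right with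
  | one => rfl
  | mul_right y hy s hs ih => rw [fin y s hs, ih]
  | mul_inv_cancel y hy s hs ih => rw [fin y s⁻¹ (by rw [hsym]; exact hs), ih]

/-! ### The averaging operators -/

/-- Double average. -/
def Av2 {G : Type} (w : G → ℝ) (q : G → G → ℝ) : ℝ := Av w (fun a => Av w (fun b => q a b))

/-- Triple average. -/
def Av3 {G : Type} (w : G → ℝ) (q : G → G → G → ℝ) : ℝ :=
  Av w (fun a => Av w (fun b => Av w (fun c => q a b c)))

lemma Av2_abs_le {G : Type} {w : G → ℝ} (hw : IsPw w) {q : G → G → ℝ} {C : ℝ}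
    (h : ∀ a b, |q a b| ≤ C) : |Av2 w q| ≤ C :=
  Av_abs_le hw (fun a => Av_abs_le hw (fun b => h a b))

lemma Av3_abs_le {G : Type} {w : G → ℝ} (hw : IsPw w) {q : G → G → G → ℝ} {C : ℝ}
    (h : ∀ a b c, |q a b c| ≤ C) : |Av3 w q| ≤ C :=
  Av_abs_le hw (fun a => Av2_abs_le hw (fun b c => h a b c))

lemma Av3_add {G : Type} {w : G → ℝ} (hw : IsPw w) {q r : G → G → G → ℝ} {C D : ℝ}
    (h : ∀ a b c, |q a b c| ≤ C) (h' : ∀ a b c, |r a b c| ≤ D) :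
    Av3 w (fun a b c => q a b c + r a b c) = Av3 w q + Av3 w r := by
  show Av w _ = Av w (fun a => Av2 w (q a)) + Av w (fun a => Av2 w (r a))
  rw [← Av_add hw (fun a => Av2_abs_le hw (fun b c => h a b c))
    (fun a => Av2_abs_le hw (fun b c => h' a b c))]
  congr 1; funext a
  unfold Av2
  rw [← Av_add hw (fun b => Av_abs_le hw (fun c => h a b c))
    (fun b => Av_abs_le hw (fun c => h' a b c))]
  congr 1; funext b
  rw [← Av_add hw (fun c => h a b c) (fun c => h' a b c)]

lemma Av3_smul {G : Type} (w : G → ℝ) (t : ℝ) (q : G → G → G → ℝ) :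
    Av3 w (fun a b c => t * q a b c) = t * Av3 w q := by
  unfold Av3
  simp only [Av_smul]

lemma Av3_sub {G : Type} {w : G → ℝ} (hw : IsPw w) {q r : G → G → G → ℝ} {C D : ℝ}
    (h : ∀ a b c, |q a b c| ≤ C) (h' : ∀ a b c, |r a b c| ≤ D) :
    Av3 w (fun a b c => q a b c - r a b c) = Av3 w q - Av3 w r := by
  have h1 := Av3_add hw h (r := fun a b c => (-1) * r a b c) (D := D)
    (fun a b c => by rw [abs_mul]; simpa using h' a b c)
  rw [Av3_smul] at h1
  have e : (fun a b c => q a b c - r a b c) = fun a b c => q a b c + (-1) * r a b c := by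
    funext a b c; ring
  rw [e, h1]; ring

lemma Av3_bc {G : Type} {w : G → ℝ} (hw : IsPw w) (q : G → G → ℝ) :
    Av3 w (fun _ b c => q b c) = Av2 w q := by
  unfold Av3 Av2
  rw [Av_const hw]

lemma Av3_ac {G : Type} {w : G → ℝ} (hw : IsPw w) (q : G → G → ℝ) :
    Av3 w (fun a _ c => q a c) = Av2 w q := by
  unfold Av3 Av2
  simp only [Av_const hw]

lemma Av3_ab {G : Type} {w : G → ℝ} (hw : IsPw w) (q : G → G → ℝ) :
    Av3 w (fun a b _ => q a b) = Av2 w q := by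
  unfold Av3 Av2
  simp only [Av_const hw]

/-- Key combination: average of the coboundary of a function of two variables. -/
lemma Av3_cob {G : Type} {w : G → ℝ} (hw : IsPw w) {p q r : G → G → ℝ} {C : ℝ}
    (hp : ∀ a b, |p a b| ≤ C) (hq : ∀ a b, |q a b| ≤ C) (hr : ∀ a b, |r a b| ≤ C) :
    Av3 w (fun a b c => p b c - q a c + r a b) = Av2 w p - Av2 w q + Av2 w r := by
  have hpq : ∀ a b c, |p b c - q a c| ≤ C + C := fun a b c =>
    (abs_sub _ _).trans (add_le_add (hp b c) (hq a c))
  rw [Av3_add hw hpq (fun a b _ => hr a b), Av3_ab hw,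
    Av3_sub hw (fun _ b c => hp b c) (fun a _ c => hq a c), Av3_bc hw, Av3_ac hw]

/-- The limit of averages, two variables. -/
def A2 {G : Type} [Group G] (w : G → ℝ) (f : G → G → ℝ) (x y : G) : ℝ :=
  ulim (fun N => Av2 (ces w N) (fun a b => f (x * a) (y * b)))

/-- The limit of averages, three variables. -/
def A3 {G : Type} [Group G] (w : G → ℝ) (f : G → G → G → ℝ) (x y z : G) : ℝ :=
  ulim (fun N => Av3 (ces w N) (fun a b c => f (x * a) (y * b) (z * c)))

lemma harm_lim {G : Type} [Group G] {w : G → ℝ} (hw : IsPw w) {φ : ℕ → G → ℝ} {C : ℝ}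
    (h : ∀ n a, |φ n a| ≤ C) (x : G) :
    Av w (fun s => ulim (fun N => Av (ces w N) (fun a => φ N (x * s * a)))) =
      ulim (fun N => Av (ces w N) (fun a => φ N (x * a))) := by
  have h1 : Filter.Tendsto (fun N => Av w (fun s => Av (ces w N) (fun a => φ N (x * s * a))))
      (Filter.hyperfilter ℕ : Filter ℕ)
      (nhds (Av w (fun s => ulim (fun N => Av (ces w N) (fun a => φ N (x * s * a)))))) :=
    Av_tendsto hw (C := C) (fun N s => Av_abs_le (ces_pw hw N) (fun a => h _ _))
      (fun s => ulim_spec (C := C) (fun N => Av_abs_le (ces_pw hw N) (fun a => h _ _)))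
  have h2 : Filter.Tendsto (fun N => Av (ces w N) (fun a => φ N (x * a)))
      (Filter.hyperfilter ℕ : Filter ℕ)
      (nhds (ulim (fun N => Av (ces w N) (fun a => φ N (x * a))))) :=
    ulim_spec (C := C) (fun N => Av_abs_le (ces_pw hw N) (fun a => h _ _))
  have h3 : Filter.Tendsto (fun N => Av w (fun s => Av (ces w N) (fun a => φ N (x * s * a)))
      - Av (ces w N) (fun a => φ N (x * a))) (Filter.hyperfilter ℕ : Filter ℕ) (nhds 0) := by
    have h4 : Filter.Tendsto (fun N : ℕ => 2 * C * ((N : ℝ) + 1)⁻¹) Filter.atTop (nhds 0) := by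
      have := (tendsto_one_div_add_atTop_nhds_zero_nat (𝕜 := ℝ)).const_mul (2 * C)
      simpa using this
    refine squeeze_zero_norm (fun N => ?_) (h4.mono_left Nat.hyperfilter_le_atTop)
    have := ces_shift hw N (f := fun t => φ N (x * t)) (fun a => h _ _)
    simp only [mul_assoc] at this ⊢
    exact this
  have h5 := tendsto_nhds_unique h3 (h1.sub h2)
  linarith

lemma A2_abs_le {G : Type} [Group G] {w : G → ℝ} (hw : IsPw w) {f : G → G → ℝ} {C : ℝ}
    (h : ∀ a b, |f a b| ≤ C) (x y : G) : |A2 w f x y| ≤ C :=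
  ulim_abs_le (fun N => Av2_abs_le (ces_pw hw N) (fun _ _ => h _ _))

lemma A3_abs_le {G : Type} [Group G] {w : G → ℝ} (hw : IsPw w) {f : G → G → G → ℝ} {C : ℝ}
    (h : ∀ a b c, |f a b c| ≤ C) (x y z : G) : |A3 w f x y z| ≤ C :=
  ulim_abs_le (fun N => Av3_abs_le (ces_pw hw N) (fun _ _ _ => h _ _ _))

lemma A2_inv {G : Type} [Group G] (w : G → ℝ) {f : G → G → ℝ}
    (h : ∀ g x y, f (g * x) (g * y) = f x y) (g x y : G) :
    A2 w f (g * x) (g * y) = A2 w f x y := by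
  unfold A2
  simp only [mul_assoc, h]

lemma A3_inv {G : Type} [Group G] (w : G → ℝ) {f : G → G → G → ℝ}
    (h : ∀ g x y z, f (g * x) (g * y) (g * z) = f x y z) (g x y z : G) :
    A3 w f (g * x) (g * y) (g * z) = A3 w f x y z := by
  unfold A3
  simp only [mul_assoc, h]

lemma A2_harm1 {G : Type} [Group G] {w : G → ℝ} (hw : IsPw w) {f : G → G → ℝ} {C : ℝ}
    (h : ∀ a b, |f a b| ≤ C) (x y : G) : Av w (fun s => A2 w f (x * s) y) = A2 w f x y :=
  harm_lim hw (φ := fun N t => Av (ces w N) (fun b => f t (y * b))) (C := C)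
    (fun N _ => Av_abs_le (ces_pw hw N) (fun _ => h _ _)) x

lemma A2_harm2 {G : Type} [Group G] {w : G → ℝ} (hw : IsPw w) {f : G → G → ℝ} {C : ℝ}
    (h : ∀ a b, |f a b| ≤ C) (x y : G) : Av w (fun s => A2 w f x (y * s)) = A2 w f x y := by
  have e : ∀ y, A2 w f x y = A2 w (fun u v => f v u) y x := by
    intro y
    unfold A2
    congr 1; funext N
    exact Av_swap (ces_pw hw N) (ces_pw hw N) (fun a b => h _ _)
  simp only [e]
  exact A2_harm1 hw (fun a b => h b a) y x

lemma A3_harm1 {G : Type} [Group G] {w : G → ℝ} (hw : IsPw w) {f : G → G → G → ℝ} {C : ℝ}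
    (h : ∀ a b c, |f a b c| ≤ C) (x y z : G) :
    Av w (fun s => A3 w f (x * s) y z) = A3 w f x y z :=
  harm_lim hw (φ := fun N t => Av2 (ces w N) (fun b c => f t (y * b) (z * c))) (C := C)
    (fun N _ => Av2_abs_le (ces_pw hw N) (fun _ _ => h _ _ _)) x

lemma A3_harm2 {G : Type} [Group G] {w : G → ℝ} (hw : IsPw w) {f : G → G → G → ℝ} {C : ℝ}
    (h : ∀ a b c, |f a b c| ≤ C) (x y z : G) :
    Av w (fun s => A3 w f x (y * s) z) = A3 w f x y z := by
  have e : ∀ y, A3 w f x y z = A3 w (fun u v t => f v u t) y x z := by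
    intro y
    unfold A3
    congr 1; funext N
    exact Av_swap (ces_pw hw N) (ces_pw hw N)
      (fun a b => Av_abs_le (ces_pw hw N) (fun c => h _ _ _))
  simp only [e]
  exact A3_harm1 hw (fun a b c => h b a c) y x z

lemma A3_add {G : Type} [Group G] {w : G → ℝ} (hw : IsPw w) {f g : G → G → G → ℝ} {C D : ℝ}
    (h : ∀ a b c, |f a b c| ≤ C) (h' : ∀ a b c, |g a b c| ≤ D) (x y z : G) :
    A3 w (fun x y z => f x y z + g x y z) x y z = A3 w f x y z + A3 w g x y z := by
  refine ulim_eq ?_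
  have h1 := ulim_spec (fun N => Av3_abs_le (ces_pw hw N)
    (fun a b c => h (x * a) (y * b) (z * c)))
  have h2 := ulim_spec (fun N => Av3_abs_le (ces_pw hw N)
    (fun a b c => h' (x * a) (y * b) (z * c)))
  refine (h1.add h2).congr (fun N => ?_)
  exact (Av3_add (ces_pw hw N) (fun a b c => h (x * a) (y * b) (z * c))
    (fun a b c => h' (x * a) (y * b) (z * c))).symm

lemma A3_smul {G : Type} [Group G] {w : G → ℝ} (hw : IsPw w) {f : G → G → G → ℝ} {C : ℝ}
    (h : ∀ a b c, |f a b c| ≤ C) (t : ℝ) (x y z : G) :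
    A3 w (fun x y z => t * f x y z) x y z = t * A3 w f x y z := by
  refine ulim_eq ?_
  have h1 := ulim_spec (fun N => Av3_abs_le (ces_pw hw N)
    (fun a b c => h (x * a) (y * b) (z * c)))
  refine (h1.const_mul t).congr (fun N => ?_)
  exact (Av3_smul _ _ _).symm

lemma A3_cob {G : Type} [Group G] {w : G → ℝ} (hw : IsPw w) {b : G → G → ℝ} {C : ℝ}
    (h : ∀ x y, |b x y| ≤ C) (x y z : G) :
    A3 w (fun x y z => b y z - b x z + b x y) x y z = A2 w b y z - A2 w b x z + A2 w b x y := by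
  refine ulim_eq ?_
  have h1 := fun x y => ulim_spec (fun N => Av2_abs_le (ces_pw hw N)
    (fun p q => h (x * p) (y * q)))
  refine (((h1 y z).sub (h1 x z)).add (h1 x y)).congr (fun N => ?_)
  exact (Av3_cob (ces_pw hw N) (fun p q => h (y * p) (z * q)) (fun p q => h (x * p) (z * q))
    (fun p q => h (x * p) (y * q))).symm

lemma A3_homotopy {G : Type} [Group G] {w : G → ℝ} (hw : IsPw w) {f : G → G → G → ℝ} {C : ℝ}
    (h : ∀ a b c, |f a b c| ≤ C) (hinv : ∀ g x y z, f (g * x) (g * y) (g * z) = f x y z)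
    (hc : ∀ x y z t, f y z t - f x z t + f x y t - f x y z = 0) :
    ∃ k : G → G → ℝ, (∀ x y, |k x y| ≤ C + C) ∧ (∀ g x y, k (g * x) (g * y) = k x y) ∧
      ∀ x y z, A3 w f x y z = f x y z + (k y z - k x z + k x y) := by
  let p : G → G → G → G → ℝ := fun x y a b => f x (x * a) (y * b) - f x y (y * b)
  have hp : ∀ x y a b, |p x y a b| ≤ C + C := fun x y a b =>
    (abs_sub _ _).trans (add_le_add (h _ _ _) (h _ _ _))
  refine ⟨fun x y => ulim (fun N => Av2 (ces w N) (p x y)), fun x y =>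
    ulim_abs_le (fun N => Av2_abs_le (ces_pw hw N) (hp x y)), fun g x y => ?_, fun x y z => ?_⟩
  · simp only [p, mul_assoc, hinv]
  · refine ulim_eq ?_
    have h1 := fun x y => ulim_spec (fun N => Av2_abs_le (ces_pw hw N) (hp x y))
    refine ((((h1 y z).sub (h1 x z)).add (h1 x y)).const_add (f x y z)).congr (fun N => ?_)
    have hN := ces_pw hw N
    rw [← Av3_cob hN (hp y z) (hp x z) (hp x y)]
    have hb : ∀ a b c, |p y z b c - p x z a c + p x y a b| ≤ (C + C) + (C + C) + (C + C) :=
      fun a b c => (abs_add_le _ _).trans (add_le_add ((abs_sub _ _).trans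
        (add_le_add (hp _ _ _ _) (hp _ _ _ _))) (hp _ _ _ _))
    have e0 : f x y z = Av3 (ces w N) (fun _ _ _ => f x y z) := by
      unfold Av3; simp only [Av_const hN]
    rw [e0, ← Av3_add hN (fun _ _ _ => le_refl |f x y z|) hb]
    congr 1
    funext a b c
    have c1 := hc x (x * a) (y * b) (z * c)
    have c2 := hc x y (y * b) (z * c)
    have c3 := hc x y z (z * c)
    simp only [p]
    linarith

lemma const2 {G : Type} [Group G] {w : G → ℝ} (hw : IsPw w) (hsym : ∀ g, w g⁻¹ = w g)
    (hgen : Subgroup.closure {g | w g ≠ 0} = ⊤) {b : G → G → ℝ} {C : ℝ}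
    (hb : ∀ x y, |b x y| ≤ C) (hinv : ∀ g x y, b (g * x) (g * y) = b x y)
    (h1 : ∀ x y, Av w (fun s => b (x * s) y) = b x y)
    (h2 : ∀ x y, Av w (fun s => b x (y * s)) = b x y) (x y : G) : b x y = b 1 1 := by
  have key : ∀ x y, b x y = b 1 (x⁻¹ * y) := fun x y => by
    rw [← hinv x⁻¹ x y]; simp
  have := biharm hw hsym hgen (β := fun t => b 1 t) (fun a => hb 1 a) (fun x => h2 1 x)
    (fun t => ?_) (x⁻¹ * y)
  · rw [key]; exact this
  · rw [← h1 1 t]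
    unfold Av
    rw [← (Equiv.inv G).tsum_eq]
    congr 1; funext s
    simp only [Equiv.inv_apply, hsym, one_mul]
    rw [key s t]

/-- The antisymmetrized average. -/
def sg {G : Type} [Group G] (w : G → ℝ) (f : G → G → G → ℝ) (x y z : G) : ℝ :=
  (A3 w f x y z - A3 w f y x z) / 2

lemma sg_abs_le {G : Type} [Group G] {w : G → ℝ} (hw : IsPw w) {f : G → G → G → ℝ} {C : ℝ}
    (h : ∀ a b c, |f a b c| ≤ C) (x y z : G) : |sg w f x y z| ≤ C := by
  have h1 := A3_abs_le hw h x y z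
  have h2 := A3_abs_le hw h y x z
  unfold sg
  rw [abs_le] at *
  constructor <;> linarith [h1.1, h1.2, h2.1, h2.2]

lemma alt_const {G : Type} [Group G] {w : G → ℝ} (hw : IsPw w) (hsym : ∀ g, w g⁻¹ = w g)
    (hgen : Subgroup.closure {g | w g ≠ 0} = ⊤) {F : G → G → G → ℝ} {C : ℝ}
    (h : ∀ a b c, |F a b c| ≤ C) (hinv : ∀ g x y z, F (g * x) (g * y) (g * z) = F x y z)
    (hc : ∀ x y z t, F y z t - F x z t + F x y t - F x y z = 0)
    (h1 : ∀ x y z, Av w (fun s => F (x * s) y z) = F x y z)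
    (h2 : ∀ x y z, Av w (fun s => F x (y * s) z) = F x y z) :
    (∀ x y z, F x y z + F y x z = 2 * F 1 1 1) ∧ (∀ x y z, F x y z + F x z y = 2 * F 1 1 1) := by
  have e1 : ∀ x z, F x x z = F 1 1 1 := by
    intro x z
    have a := hc x x x z
    have b := hinv x 1 1 1
    simp only [mul_one] at b
    linarith
  have e2 : ∀ x y z, F y x z + F x y z = F 1 1 1 + F x y x := by
    intro x y z
    have a := hc x y x z
    rw [e1 x z] at a
    linarith
  have e3 : ∀ x y, F x y x = F 1 1 1 := by
    intro x y
    have hb : ∀ x y, |F y x 1 + F x y 1| ≤ C + C := fun x y =>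
      (abs_add_le _ _).trans (add_le_add (h _ _ _) (h _ _ _))
    have := const2 hw hsym hgen (b := fun x y => F y x 1 + F x y 1) hb
      (fun g x y => by
        rw [e2, e2]
        have := hinv g x y x
        rw [this])
      (fun x y => by rw [Av_add hw (fun _ => h _ _ _) (fun _ => h _ _ _), h1, h2])
      (fun x y => by rw [Av_add hw (fun _ => h _ _ _) (fun _ => h _ _ _), h1, h2]) x y
    simp only [e2] at this
    linarith
  have e4 : ∀ x y, F x y y = F 1 1 1 := by
    intro x y
    have a := hc x y y y
    rw [e1 y y] at a
    linarith
  refine ⟨fun x y z => ?_, fun x y z => ?_⟩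
  · have := e2 y x z
    rw [e3 y x] at this
    linarith
  · have a := hc x y z y
    rw [e3 y z, e4 x y] at a
    linarith

lemma av3_harm {G : Type} [Group G] {w : G → ℝ} {F : G → G → G → ℝ}
    (h1 : ∀ x y z, Av w (fun s => F (x * s) y z) = F x y z)
    (h2 : ∀ x y z, Av w (fun s => F x (y * s) z) = F x y z)
    (h3 : ∀ x y z, Av w (fun s => F x y (z * s)) = F x y z) (x y z : G) :
    Av3 w (fun a b c => F (x * a) (y * b) (z * c)) = F x y z := by
  unfold Av3
  simp only [h3, h2, h1]

lemma tsum_fin3 {G : Type} {w : G → ℝ} (hw : IsPw w) {F : G → G → G → ℝ} {C : ℝ}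
    (h : ∀ a b c, |F a b c| ≤ C) :
    ∑' γ : Fin 3 → G, (∏ i, w (γ i)) * F (γ 0) (γ 1) (γ 2) = Av3 w F := by
  let e : G × G × G ≃ (Fin 3 → G) :=
    { toFun := fun p => ![p.1, p.2.1, p.2.2]
      invFun := fun γ => (γ 0, γ 1, γ 2)
      left_inv := fun p => by simp
      right_inv := fun γ => by funext i; fin_cases i <;> rfl }
  rw [← e.tsum_eq]
  have hw2 : IsPw (fun p : G × G => w p.1 * w p.2) := by
    refine ⟨fun p => mul_nonneg (hw.nn _) (hw.nn _), ?_⟩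
    have := hw.hs.mul hw.hs (hw.hs.summable.mul_of_nonneg hw.hs.summable hw.nn hw.nn)
    simpa using this
  have hs := pair_summable hw hw2 (F := fun a p => F a p.1 p.2) (fun a p => h _ _ _)
  have e1 : ∀ p : G × G × G, (∏ i, w (e p i)) * F (e p 0) (e p 1) (e p 2) =
      w p.1 * (w p.2.1 * w p.2.2 * F p.1 p.2.1 p.2.2) := by
    intro p
    simp only [e, Fin.prod_univ_three, Equiv.coe_fn_mk, Matrix.cons_val]
    ring
  simp only [e1]
  rw [hs.tsum_prod]
  unfold Av3
  show _ = ∑' a, w a * _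
  congr 1; funext a
  show ∑' c : G × G, w a * (w c.1 * w c.2 * F a c.1 c.2) = _
  rw [tsum_mul_left]
  congr 1
  have hs2 := pair_summable hw hw (F := fun b c => F a b c) (fun b c => h _ _ _)
  simp only [mul_assoc]
  rw [hs2.tsum_prod]
  simp only [tsum_mul_left]
  rfl

lemma Av_inv {G : Type} [Group G] {w : G → ℝ} (hsym : ∀ g, w g⁻¹ = w g) (f : G → ℝ) :
    Av w (fun a => f a⁻¹) = Av w f := by
  unfold Av
  rw [← (Equiv.inv G).tsum_eq]
  simp [hsym]

/-! ### Assembly -/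

lemma fin3_eta {G : Type} (g : Fin 3 → G) : ![g 0, g 1, g 2] = g := by
  funext i; fin_cases i <;> rfl

lemma fin2_eta {G : Type} (g : Fin 2 → G) : ![g 0, g 1] = g := by
  funext i; fin_cases i <;> rfl

lemma gcob1_apply {G : Type} (b : (Fin 2 → G) → ℝ) (g : Fin 3 → G) :
    gcob G 1 b g = b ![g 1, g 2] - b ![g 0, g 2] + b ![g 0, g 1] := by
  show ∑ i : Fin 3, ((-1 : ℝ) ^ (i : ℕ)) * b (g ∘ i.succAbove) = _
  rw [Fin.sum_univ_three]
  have e0 : g ∘ (0 : Fin 3).succAbove = ![g 1, g 2] := by funext i; fin_cases i <;> rfl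
  have e1 : g ∘ (1 : Fin 3).succAbove = ![g 0, g 2] := by funext i; fin_cases i <;> rfl
  have e2 : g ∘ (2 : Fin 3).succAbove = ![g 0, g 1] := by funext i; fin_cases i <;> rfl
  rw [e0, e1, e2]
  simp
  ring

lemma gcob2_apply {G : Type} (f : (Fin 3 → G) → ℝ) (g : Fin 4 → G) :
    gcob G 2 f g = f ![g 1, g 2, g 3] - f ![g 0, g 2, g 3] + f ![g 0, g 1, g 3]
      - f ![g 0, g 1, g 2] := by
  show ∑ i : Fin 4, ((-1 : ℝ) ^ (i : ℕ)) * f (g ∘ i.succAbove) = _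
  rw [Fin.sum_univ_four]
  have e0 : g ∘ (0 : Fin 4).succAbove = ![g 1, g 2, g 3] := by funext i; fin_cases i <;> rfl
  have e1 : g ∘ (1 : Fin 4).succAbove = ![g 0, g 2, g 3] := by funext i; fin_cases i <;> rfl
  have e2 : g ∘ (2 : Fin 4).succAbove = ![g 0, g 1, g 3] := by funext i; fin_cases i <;> rfl
  have e3 : g ∘ (3 : Fin 4).succAbove = ![g 0, g 1, g 2] := by funext i; fin_cases i <;> rfl
  rw [e0, e1, e2, e3]
  have h3 : ((3 : Fin 4) : ℕ) = 3 := rfl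
  simp [h3]
  ring

/-- Currying of cochains. -/
def cur {G : Type} (f : (Fin 3 → G) → ℝ) (x y z : G) : ℝ := f ![x, y, z]

lemma cur_inv {G : Type} [Group G] {f : (Fin 3 → G) → ℝ} (hf : f ∈ grpZ G 2) (g x y z : G) :
    cur f (g * x) (g * y) (g * z) = cur f x y z := by
  have h := hf.1.2 g ![x, y, z]
  unfold cur
  rw [← h]
  congr 1
  funext i; fin_cases i <;> rfl

lemma cur_coc {G : Type} [Group G] {f : (Fin 3 → G) → ℝ} (hf : f ∈ grpZ G 2) (x y z t : G) :
    cur f y z t - cur f x z t + cur f x y t - cur f x y z = 0 := by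
  have h : gcob G 2 f = 0 := hf.2
  have h2 := congrFun h ![x, y, z, t]
  rw [gcob2_apply] at h2
  exact h2

lemma supN_set_nonempty {S : Type} {f : S → ℝ} (h : ∃ C, ∀ s, |f s| ≤ C) :
    {C : ℝ | 0 ≤ C ∧ ∀ s, |f s| ≤ C}.Nonempty := by
  obtain ⟨C, hC⟩ := h
  exact ⟨max C 0, le_max_right _ _, fun s => (hC s).trans (le_max_left _ _)⟩

lemma supN_nonneg {S : Type} (f : S → ℝ) : 0 ≤ supN f := Real.sInf_nonneg (fun _ h => h.1)

lemma le_supN {S : Type} {f : S → ℝ} (h : ∃ C, ∀ s, |f s| ≤ C) (s : S) : |f s| ≤ supN f :=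
  le_csInf (supN_set_nonempty h) (fun _ hC => hC.2 s)

lemma supN_le {S : Type} {f : S → ℝ} {C : ℝ} (h0 : 0 ≤ C) (h : ∀ s, |f s| ≤ C) : supN f ≤ C :=
  csInf_le ⟨0, fun _ h => h.1⟩ ⟨h0, h⟩

/-- All properties of the averaged cochain at once. -/
lemma sg_props {G : Type} [Group G] {w : G → ℝ} (hw : IsPw w) (hsym : ∀ g, w g⁻¹ = w g)
    (hgen : Subgroup.closure {g | w g ≠ 0} = ⊤) {f : G → G → G → ℝ} {C : ℝ}
    (h : ∀ a b c, |f a b c| ≤ C) (hinv : ∀ g x y z, f (g * x) (g * y) (g * z) = f x y z)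
    (hc : ∀ x y z t, f y z t - f x z t + f x y t - f x y z = 0) :
    (∃ k : G → G → ℝ, ∃ D, (∀ x y, |k x y| ≤ D) ∧ (∀ g x y, k (g * x) (g * y) = k x y) ∧
      ∀ x y z, sg w f x y z = f x y z + (k y z - k x z + k x y)) ∧
    (∀ x y z, sg w f y x z = - sg w f x y z) ∧ (∀ x y z, sg w f x z y = - sg w f x y z) ∧
    (∀ x y z, Av3 w (fun a b c => sg w f (x * a) (y * b) (z * c)) = sg w f x y z) := by
  obtain ⟨k, hk, kinv, hkf⟩ := A3_homotopy hw h hinv hc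
  have hcF : ∀ x y z t, A3 w f y z t - A3 w f x z t + A3 w f x y t - A3 w f x y z = 0 := by
    intro x y z t
    simp only [hkf]
    linarith [hc x y z t]
  obtain ⟨al1, al2⟩ := alt_const hw hsym hgen (A3_abs_le hw h) (A3_inv w hinv) hcF
    (A3_harm1 hw h) (A3_harm2 hw h)
  have e : ∀ x y z, sg w f x y z = A3 w f x y z - A3 w f 1 1 1 := by
    intro x y z
    unfold sg
    linarith [al1 x y z]
  have s1 : ∀ x y z, sg w f y x z = - sg w f x y z := fun x y z => by unfold sg; ring
  have s2 : ∀ x y z, sg w f x z y = - sg w f x y z := fun x y z => by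
    rw [e, e]; linarith [al2 x y z]
  have neg : ∀ g : G → ℝ, Av w (fun s => - g s) = - Av w g := fun g => by
    have := Av_smul w (-1) g
    simpa using this
  have b1 : ∀ x y z, Av w (fun s => sg w f (x * s) y z) = sg w f x y z := by
    intro x y z
    simp only [e]
    rw [Av_sub hw (fun s => A3_abs_le hw h _ _ _) (fun _ => le_refl |A3 w f 1 1 1|),
      Av_const hw, A3_harm1 hw h]
  have b2 : ∀ x y z, Av w (fun s => sg w f x (y * s) z) = sg w f x y z := by
    intro x y z
    simp only [e]
    rw [Av_sub hw (fun s => A3_abs_le hw h _ _ _) (fun _ => le_refl |A3 w f 1 1 1|),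
      Av_const hw, A3_harm2 hw h]
  have b3 : ∀ x y z, Av w (fun s => sg w f x y (z * s)) = sg w f x y z := by
    intro x y z
    have : (fun s => sg w f x y (z * s)) = fun s => - sg w f x (z * s) y := by
      funext s; exact s2 _ _ _
    rw [this, neg, b2, ← s2]
  refine ⟨⟨fun x y => k x y - A3 w f 1 1 1, (C + C) + |A3 w f 1 1 1|, fun x y =>
    (abs_sub _ _).trans (by linarith [hk x y]), fun g x y => by simp only [kinv], fun x y z => ?_⟩,
    s1, s2, av3_harm b1 b2 b3⟩
  rw [e, hkf]; ring

lemma sg_cob {G : Type} [Group G] {w : G → ℝ} (hw : IsPw w) (hsym : ∀ g, w g⁻¹ = w g)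
    (hgen : Subgroup.closure {g | w g ≠ 0} = ⊤) {b : G → G → ℝ} {C : ℝ}
    (h : ∀ x y, |b x y| ≤ C) (hinv : ∀ g x y, b (g * x) (g * y) = b x y) (x y z : G) :
    sg w (fun x y z => b y z - b x z + b x y) x y z = 0 := by
  have hc := const2 hw hsym hgen (A2_abs_le hw h) (A2_inv w hinv) (A2_harm1 hw h) (A2_harm2 hw h)
  unfold sg
  rw [A3_cob hw h, A3_cob hw h, hc y z, hc x z, hc x y, hc y x]
  ring

lemma sg_add {G : Type} [Group G] {w : G → ℝ} (hw : IsPw w) {f g : G → G → G → ℝ} {C D : ℝ}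
    (h : ∀ a b c, |f a b c| ≤ C) (h' : ∀ a b c, |g a b c| ≤ D) (x y z : G) :
    sg w (fun x y z => f x y z + g x y z) x y z = sg w f x y z + sg w g x y z := by
  unfold sg
  rw [A3_add hw h h', A3_add hw h h']; ring

lemma sg_smul {G : Type} [Group G] {w : G → ℝ} (hw : IsPw w) {f : G → G → G → ℝ} {C : ℝ}
    (h : ∀ a b c, |f a b c| ≤ C) (t : ℝ) (x y z : G) :
    sg w (fun x y z => t * f x y z) x y z = t * sg w f x y z := by
  unfold sg
  rw [A3_smul hw h, A3_smul hw h]; ring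

lemma alt_of {G : Type} {S : G → G → G → ℝ} (s1 : ∀ x y z, S y x z = - S x y z)
    (s2 : ∀ x y z, S x z y = - S x y z) :
    (fun g : Fin 3 → G => S (g 0) (g 1) (g 2)) ∈ altF G 2 := by
  intro g π
  have hπ : π ∈ Submonoid.closure
      (Set.range fun i : Fin 2 => Equiv.swap i.castSucc i.succ) := by
    rw [Equiv.Perm.mclosure_swap_castSucc_succ]; trivial
  induction hπ using Submonoid.closure_induction generalizing g with
  | mem π h =>
    obtain ⟨i, rfl⟩ := h
    fin_cases i
    · show S (g (Equiv.swap (0 : Fin 3) 1 0)) (g (Equiv.swap (0 : Fin 3) 1 1))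
        (g (Equiv.swap (0 : Fin 3) 1 2)) =
        ((Equiv.Perm.sign (Equiv.swap (0 : Fin 3) 1) : ℤ) : ℝ) * S (g 0) (g 1) (g 2)
      rw [Equiv.Perm.sign_swap (by decide), show Equiv.swap (0 : Fin 3) 1 0 = 1 by decide,
        show Equiv.swap (0 : Fin 3) 1 1 = 0 by decide,
        show Equiv.swap (0 : Fin 3) 1 2 = 2 by decide, s1]
      simp
    · show S (g (Equiv.swap (1 : Fin 3) 2 0)) (g (Equiv.swap (1 : Fin 3) 2 1))
        (g (Equiv.swap (1 : Fin 3) 2 2)) =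
        ((Equiv.Perm.sign (Equiv.swap (1 : Fin 3) 2) : ℤ) : ℝ) * S (g 0) (g 1) (g 2)
      rw [Equiv.Perm.sign_swap (by decide), show Equiv.swap (1 : Fin 3) 2 0 = 0 by decide,
        show Equiv.swap (1 : Fin 3) 2 1 = 2 by decide,
        show Equiv.swap (1 : Fin 3) 2 2 = 1 by decide, s2]
      simp
  | one => simp
  | mul π ρ _ _ h1 h2 =>
    have a := h2 (g ∘ π)
    have b := h1 g
    rw [b] at a
    rw [Equiv.Perm.sign_mul]
    push_cast
    calc _ = _ := a
      _ = _ := by ring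

lemma pluri_of {G : Type} [Group G] {w : G → ℝ} (hw : IsPw w) (hsym : ∀ g, w g⁻¹ = w g)
    {S : G → G → G → ℝ} {C : ℝ} (h : ∀ x y z, |S x y z| ≤ C)
    (hS : ∀ x y z, Av3 w (fun a b c => S (x * a) (y * b) (z * c)) = S x y z) :
    IsPluriharmonic w (n := 2) (fun g : Fin 3 → G => S (g 0) (g 1) (g 2)) := by
  intro g
  have h1 := tsum_fin3 hw (F := fun a b c => S (g 0 * a⁻¹) (g 1 * b⁻¹) (g 2 * c⁻¹))
    (fun a b c => h _ _ _)
  refine Eq.trans ?_ h1.symm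
  show S (g 0) (g 1) (g 2) = _
  rw [← hS (g 0) (g 1) (g 2)]
  unfold Av3
  rw [← Av_inv hsym]
  congr 1; funext a
  rw [← Av_inv hsym]
  congr 1; funext b
  rw [← Av_inv hsym]

/-- The averaging map on cocycles. -/
def sgL {G : Type} [Group G] {w : G → ℝ} (hw : IsPw w) :
    grpZ G 2 →ₗ[ℝ] ((Fin 3 → G) → ℝ) where
  toFun f := fun g => sg w (cur f.1) (g 0) (g 1) (g 2)
  map_add' f f' := by
    obtain ⟨C, hC⟩ := f.2.1.1
    obtain ⟨D, hD⟩ := f'.2.1.1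
    funext g
    exact sg_add hw (f := cur f.1) (g := cur f'.1) (fun a b c => hC _) (fun a b c => hD _) _ _ _
  map_smul' r f := by
    obtain ⟨C, hC⟩ := f.2.1.1
    funext g
    exact sg_smul hw (f := cur f.1) (fun a b c => hC _) r _ _ _

lemma sgL_ker {G : Type} [Group G] {w : G → ℝ} (hw : IsPw w) (hsym : ∀ g, w g⁻¹ = w g)
    (hgen : Subgroup.closure {g | w g ≠ 0} = ⊤) :
    (grpB G 2).comap (grpZ G 2).subtype ≤ LinearMap.ker (sgL hw) := by
  rintro ⟨f, hf⟩ ⟨b, ⟨⟨C, hC⟩, hinv⟩, hb⟩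
  rw [LinearMap.mem_ker]
  funext g
  show sg w (cur f) (g 0) (g 1) (g 2) = 0
  have e : cur f = fun x y z => b ![y, z] - b ![x, z] + b ![x, y] := by
    funext x y z
    have hb' : gcob G 1 b = f := hb
    unfold cur
    rw [← hb', gcob1_apply]
    rfl
  rw [e]
  refine sg_cob hw hsym hgen (b := fun x y => b ![x, y]) (fun x y => hC _) (fun g x y => ?_) _ _ _
  have h := hinv g ![x, y]
  show b _ = b _
  rw [← h]
  congr 1
  funext i; fin_cases i <;> rfl

lemma sgL_class {G : Type} [Group G] {w : G → ℝ} (hw : IsPw w) (hsym : ∀ g, w g⁻¹ = w g)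
    (hgen : Subgroup.closure {g | w g ≠ 0} = ⊤) (f : grpZ G 2) :
    ∃ b ∈ grpC G 1, sgL hw f = f.1 + gcob G 1 b := by
  obtain ⟨C, hC⟩ := f.2.1.1
  obtain ⟨⟨k, D, hk, kinv, e⟩, -⟩ := sg_props hw hsym hgen (f := cur f.1) (fun a b c => hC _)
    (cur_inv f.2) (cur_coc f.2)
  refine ⟨fun g => k (g 0) (g 1), ⟨⟨D, fun g => hk _ _⟩, fun γ g => kinv _ _ _⟩, ?_⟩
  funext g
  show sg w (cur f.1) (g 0) (g 1) (g 2) = f.1 g + gcob G 1 _ g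
  rw [gcob1_apply, e]
  unfold cur
  rw [fin3_eta]
  rfl

lemma gcob_gcob {G : Type} (b : (Fin 2 → G) → ℝ) : gcob G 2 (gcob G 1 b) = 0 := by
  funext g
  rw [gcob2_apply]
  simp only [gcob1_apply, Matrix.cons_val]
  show _ = (0 : ℝ)
  ring

lemma gcob_mem {G : Type} [Group G] {b : (Fin 2 → G) → ℝ} (hb : b ∈ grpC G 1) :
    gcob G 1 b ∈ grpZ G 2 := by
  obtain ⟨⟨C, hC⟩, hinv⟩ := hb
  refine ⟨⟨⟨C + C + C, fun g => ?_⟩, fun γ g => ?_⟩, gcob_gcob b⟩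
  · rw [gcob1_apply]
    exact (abs_add_le _ _).trans (add_le_add ((abs_sub _ _).trans
        (add_le_add (hC _) (hC _))) (hC _))
  · show ∑ i : Fin 3, ((-1 : ℝ) ^ (i : ℕ)) * b ((fun j => γ • g j) ∘ i.succAbove) =
      ∑ i : Fin 3, ((-1 : ℝ) ^ (i : ℕ)) * b (g ∘ i.succAbove)
    refine Finset.sum_congr rfl (fun i _ => ?_)
    congr 1
    exact hinv γ (g ∘ i.succAbove)

/-- **Isometric sections of `H_b²` by pluriharmonic cocycles (Burger–Monod).**
Let `Γ` be a countable group and `μ` a symmetric probability measure on `Γ` whose support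
generates `Γ`. Then there is an isometric linear section
`σ : H_b²(Γ) → Zℓ^∞(Γ³)^Γ` of the canonical projection from `Γ`-invariant bounded
2-cocycles onto `H_b²(Γ)`; moreover `σ` takes values in the `Γ`-invariant alternating
`μ`-pluriharmonic cocycles. -/
theorem pluriharmonic_isometric_section
    (Γ : Type) [Group Γ] [Countable Γ] (μ : Γ → ℝ) (hμ : IsSymmGenProb Γ μ) :
    ∃ σ : Hb Γ 2 →ₗ[ℝ] ((Fin 3 → Γ) → ℝ),
      ∃ hmem : ∀ φ : Hb Γ 2, σ φ ∈ grpZ Γ 2,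
        (∀ φ : Hb Γ 2, HbClass ⟨σ φ, hmem φ⟩ = φ) ∧
        (∀ φ : Hb Γ 2, supN (σ φ) = hbNorm φ) ∧
        (∀ φ : Hb Γ 2, σ φ ∈ altF Γ 2) ∧
        (∀ φ : Hb Γ 2, IsPluriharmonic μ (σ φ)) := by
  obtain ⟨hnn, hsym, hsum, h1, hgen⟩ := hμ
  have hw : IsPw μ := ⟨hnn, by rw [← h1]; exact hsum.hasSum⟩
  let σ : Hb Γ 2 →ₗ[ℝ] ((Fin 3 → Γ) → ℝ) :=
    Submodule.liftQ _ (sgL hw) (sgL_ker hw hsym hgen)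
  have hσ : ∀ f : grpZ Γ 2, σ (HbClass f) = sgL hw f := fun f => rfl
  have hsurj : ∀ φ : Hb Γ 2, ∃ f : grpZ Γ 2, HbClass f = φ := fun φ =>
    Submodule.Quotient.mk_surjective _ φ
  have hmem : ∀ φ : Hb Γ 2, σ φ ∈ grpZ Γ 2 := by
    intro φ
    obtain ⟨f, rfl⟩ := hsurj φ
    obtain ⟨b, hb, e⟩ := sgL_class hw hsym hgen f
    rw [hσ, e]
    exact Submodule.add_mem _ f.2 (gcob_mem hb)
  have hsec : ∀ φ : Hb Γ 2, HbClass ⟨σ φ, hmem φ⟩ = φ := by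
    intro φ
    obtain ⟨f, rfl⟩ := hsurj φ
    obtain ⟨b, hb, e⟩ := sgL_class hw hsym hgen f
    refine (Submodule.Quotient.eq _).2 ?_
    refine ⟨b, hb, ?_⟩
    show gcob Γ 1 b = σ (HbClass f) - f.1
    rw [hσ, e]
    simp
  refine ⟨σ, hmem, hsec, fun φ => ?_, fun φ => ?_, fun φ => ?_⟩
  · apply le_antisymm
    · refine le_csInf ⟨_, ⟨σ φ, hmem φ⟩, hsec φ, rfl⟩ ?_
      rintro r ⟨f, rfl, rfl⟩
      refine supN_le (supN_nonneg _) (fun g => ?_)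
      exact sg_abs_le hw (f := cur f.1) (fun a b c => le_supN f.2.1.1 _) _ _ _
    · refine csInf_le ⟨0, ?_⟩ ⟨⟨σ φ, hmem φ⟩, hsec φ, rfl⟩
      rintro r ⟨f, -, rfl⟩
      exact supN_nonneg _
  · obtain ⟨f, rfl⟩ := hsurj φ
    obtain ⟨C, hC⟩ := f.2.1.1
    obtain ⟨-, s1, s2, -⟩ := sg_props hw hsym hgen (f := cur f.1) (fun a b c => hC _)
      (cur_inv f.2) (cur_coc f.2)
    exact alt_of s1 s2
  · obtain ⟨f, rfl⟩ := hsurj φ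
    obtain ⟨C, hC⟩ := f.2.1.1
    obtain ⟨-, -, -, s3⟩ := sg_props hw hsym hgen (f := cur f.1) (fun a b c => hC _)
      (cur_inv f.2) (cur_coc f.2)
    exact pluri_of hw hsym (sg_abs_le hw (f := cur f.1) (fun a b c => hC _)) s3

end GrpBC
end
end

section
/- Let (X,Y) be a pair of spaces and let β_n : C_n(Y→X) → C_n(X,Y) be the chain map β_n(u,v) = [u]. Then for every θ ∈ [0,∞) the induced map H(β_n) : (H_n(Y→X), ‖·‖_1(θ)) → (H_n(X,Y), ‖·‖_1(θ)) is an isometric isomorphism. -/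
noncomputable section

namespace BddCoh

/-! ### Singular chains and homology -/

/-- The standard `n`-simplex. -/
abbrev Δ (n : ℕ) : Set (Fin (n + 1) → ℝ) := stdSimplex ℝ (Fin (n + 1))

/-- Singular `n`-simplices in `X`. -/
abbrev SSimplex (X : Type) [TopologicalSpace X] (n : ℕ) := C(Δ n, X)

/-- Singular `n`-chains in `X` with coefficients in `R`. -/
def SChain (R : Type) [Ring R] (X : Type) [TopologicalSpace X] (n : ℕ) : Type :=
  SSimplex X n →₀ R

instance (R : Type) [Ring R] (X : Type) [TopologicalSpace X] (n : ℕ) :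
    AddCommGroup (SChain R X n) := Finsupp.instAddCommGroup

instance (R : Type) [Ring R] (X : Type) [TopologicalSpace X] (n : ℕ) :
    Module R (SChain R X n) := Finsupp.module (SSimplex X n) R

/-- Chains are finitely supported functions on simplices. -/
def chainEquiv (R : Type) [Ring R] (X : Type) [TopologicalSpace X] (n : ℕ) :
    (SSimplex X n →₀ R) ≃ₗ[R] SChain R X n := LinearEquiv.refl R (SChain R X n)

/-- The `i`-th face inclusion of standard simplices. -/
def face {n : ℕ} (i : Fin (n + 2)) : C(Δ n, Δ (n + 1)) where
  toFun x := ⟨i.insertNth 0 x.1, by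
    refine ⟨fun j => ?_, ?_⟩
    · refine Fin.succAboveCases i ?_ (fun j => ?_) j
      · simp
      · simp [x.2.1 j]
    · rw [Fin.sum_univ_succAbove _ i]
      simp [x.2.2]⟩
  continuous_toFun := by
    refine Continuous.subtype_mk ?_ _
    exact Continuous.finInsertNth i continuous_const continuous_subtype_val

variable {X : Type} [TopologicalSpace X] {R : Type} [Ring R]

/-- The `i`-th face of a singular `(n+1)`-simplex. -/
def faceOf {n : ℕ} (σ : SSimplex X (n + 1)) (i : Fin (n + 2)) : SSimplex X n :=
  σ.comp (face i)

/-- The boundary of a singular `(n+1)`-simplex, as a chain. -/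
def bdryChain (R : Type) [Ring R] {n : ℕ} (σ : SSimplex X (n + 1)) : SChain R X n :=
  chainEquiv R X n (∑ i : Fin (n + 2), Finsupp.single (faceOf σ i) ((-1 : R) ^ (i : ℕ)))

/-- The singular boundary operator. -/
def bdry (R : Type) [Ring R] (X : Type) [TopologicalSpace X] (n : ℕ) :
    SChain R X (n + 1) →ₗ[R] SChain R X n :=
  (Finsupp.linearCombination R (bdryChain R)).comp (chainEquiv R X (n + 1)).symm.toLinearMap

/-- The ℓ¹-norm of a real singular chain. -/
def l1 {n : ℕ} (c : SChain ℝ X n) : ℝ :=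
  ((chainEquiv ℝ X n).symm c).sum fun _ r => |r|

/-- The submodule of chains supported on simplices with image contained in `Y`. -/
def chainsIn (R : Type) [Ring R] (X : Type) [TopologicalSpace X] (Y : Set X) (n : ℕ) :
    Submodule R (SChain R X n) :=
  (Finsupp.supported R R {σ : SSimplex X n | Set.range σ ⊆ Y}).map (chainEquiv R X n).toLinearMap

/-- Relative `(n+1)`-cycles of the pair `(X, Y)`. -/
def relCycles (R : Type) [Ring R] (X : Type) [TopologicalSpace X] (Y : Set X) (n : ℕ) :
    Submodule R (SChain R X (n + 1)) :=
  (chainsIn R X Y n).comap (bdry R X n)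

/-- Relative `(n+1)`-boundaries of the pair `(X, Y)`. -/
def relBdries (R : Type) [Ring R] (X : Type) [TopologicalSpace X] (Y : Set X) (n : ℕ) :
    Submodule R (SChain R X (n + 1)) :=
  LinearMap.range (bdry R X (n + 1)) ⊔ chainsIn R X Y (n + 1)

/-- Relative singular homology `H_{n+1}(X, Y; R)`. -/
def relHomology (R : Type) [Ring R] (X : Type) [TopologicalSpace X] (Y : Set X) (n : ℕ) :=
  relCycles R X Y n ⧸ ((relBdries R X Y n).comap (relCycles R X Y n).subtype)

instance (Y : Set X) (n : ℕ) : AddCommGroup (relHomology R X Y n) :=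
  Submodule.Quotient.addCommGroup _

instance (Y : Set X) (n : ℕ) : Module R (relHomology R X Y n) :=
  Submodule.Quotient.module _

/-- The class of a relative cycle in relative homology. -/
def relHomClass {Y : Set X} {n : ℕ} (c : relCycles R X Y n) : relHomology R X Y n :=
  Submodule.Quotient.mk c

/-- The ℓ¹-seminorm on relative singular homology. -/
def l1HomNorm {Y : Set X} {n : ℕ} (α : relHomology ℝ X Y n) : ℝ :=
  sInf {r : ℝ | ∃ c : relCycles ℝ X Y n, relHomClass c = α ∧ r = l1 c.1}


/-! ### The homology mapping cone of a pair -/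

/-- Pushforward of singular chains along a continuous map. -/
def pushChain (R : Type) [Ring R] {X X' : Type} [TopologicalSpace X] [TopologicalSpace X']
    (f : C(X, X')) (n : ℕ) : SChain R X n →ₗ[R] SChain R X' n :=
  (chainEquiv R X' n).toLinearMap.comp
    ((Finsupp.lmapDomain R R (fun σ : SSimplex X n => f.comp σ)).comp
      (chainEquiv R X n).symm.toLinearMap)

/-- The inclusion of a subspace, as a continuous map. -/
def subIncl {X : Type} [TopologicalSpace X] (Y : Set X) : C(↥Y, X) :=
  ⟨Subtype.val, continuous_subtype_val⟩

lemma pushChain_subIncl_mem_chainsIn {X : Type} [TopologicalSpace X] (Y : Set X) {n : ℕ}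
    (v : SChain ℝ ↥Y n) : pushChain ℝ (subIncl Y) n v ∈ chainsIn ℝ X Y n := by
  classical
  have hw : Finsupp.mapDomain (fun σ : SSimplex ↥Y n => (subIncl Y).comp σ)
      ((chainEquiv ℝ ↥Y n).symm v) ∈
      Finsupp.supported ℝ ℝ {σ : SSimplex X n | Set.range ⇑σ ⊆ Y} := by
    rw [Finsupp.mem_supported]
    intro σ hσ
    have := Finsupp.mapDomain_support hσ
    obtain ⟨τ, -, rfl⟩ := Finset.mem_image.1 this
    rintro - ⟨x, rfl⟩
    exact (τ x).2
  exact Submodule.mem_map_of_mem hw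

variable (X : Type) [TopologicalSpace X] (Y : Set X)

/-- Chains of the mapping cone: `ConeChain X Y n = C_{n+1}(Y → X) = C_{n+1}(X) ⊕ C_n(Y)`. -/
abbrev ConeChain (n : ℕ) : Type := SChain ℝ X (n + 1) × SChain ℝ ↥Y n

/-- The differential of the mapping cone complex. -/
def coneD (n : ℕ) : ConeChain X Y (n + 1) →ₗ[ℝ] ConeChain X Y n :=
  LinearMap.prod
    ((bdry ℝ X (n + 1)).comp (LinearMap.fst ℝ _ _) +
      (pushChain ℝ (subIncl Y) (n + 1)).comp (LinearMap.snd ℝ _ _))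
    (-((bdry ℝ ↥Y n).comp (LinearMap.snd ℝ _ _)))

/-- The bottom differential of the mapping cone complex. -/
def coneD0 : ConeChain X Y 0 →ₗ[ℝ] SChain ℝ X 0 :=
  (bdry ℝ X 0).comp (LinearMap.fst ℝ _ _) +
    (pushChain ℝ (subIncl Y) 0).comp (LinearMap.snd ℝ _ _)

/-- Cycles of the mapping cone. -/
def coneCycles : ∀ n : ℕ, Submodule ℝ (ConeChain X Y n)
  | 0 => LinearMap.ker (coneD0 X Y)
  | (m + 1) => LinearMap.ker (coneD X Y m)

/-- Boundaries of the mapping cone. -/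
def coneBdries (n : ℕ) : Submodule ℝ (ConeChain X Y n) := LinearMap.range (coneD X Y n)

/-- The homology `H_{n+1}(Y → X)` of the mapping cone. -/
def coneHomology (n : ℕ) :=
  coneCycles X Y n ⧸ ((coneBdries X Y n).comap (coneCycles X Y n).subtype)

instance (n : ℕ) : AddCommGroup (coneHomology X Y n) := Submodule.Quotient.addCommGroup _
instance (n : ℕ) : Module ℝ (coneHomology X Y n) := Submodule.Quotient.module _

variable {X Y}

/-- The class of a cone cycle in the homology of the mapping cone. -/
def coneHomClass {n : ℕ} (c : coneCycles X Y n) : coneHomology X Y n :=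
  Submodule.Quotient.mk c

/-- The seminorm induced on the homology of the mapping cone by the norm
`‖(u, v)‖₁(θ) = ‖u‖₁ + θ‖v‖₁`. -/
def coneThetaNorm {n : ℕ} (θ : ℝ) (α : coneHomology X Y n) : ℝ :=
  sInf {r : ℝ | ∃ c : coneCycles X Y n, coneHomClass c = α ∧ r = l1 c.1.1 + θ * l1 c.1.2}

lemma coneCycles_fst_mem {n : ℕ} (c : ConeChain X Y n) (hc : c ∈ coneCycles X Y n) :
    c.1 ∈ relCycles ℝ X Y n := by
  cases n with
  | zero =>
    have h : bdry ℝ X 0 c.1 + pushChain ℝ (subIncl Y) 0 c.2 = 0 := hc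
    have : bdry ℝ X 0 c.1 = -(pushChain ℝ (subIncl Y) 0 c.2) :=
      eq_neg_of_add_eq_zero_left h
    show bdry ℝ X 0 c.1 ∈ chainsIn ℝ X Y 0
    rw [this]
    exact neg_mem (pushChain_subIncl_mem_chainsIn Y c.2)
  | succ m =>
    have h : coneD X Y m c = 0 := hc
    have h1 : bdry ℝ X (m + 1) c.1 + pushChain ℝ (subIncl Y) (m + 1) c.2 = 0 :=
      congrArg Prod.fst h
    have : bdry ℝ X (m + 1) c.1 = -(pushChain ℝ (subIncl Y) (m + 1) c.2) :=
      eq_neg_of_add_eq_zero_left h1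
    show bdry ℝ X (m + 1) c.1 ∈ chainsIn ℝ X Y (m + 1)
    rw [this]
    exact neg_mem (pushChain_subIncl_mem_chainsIn Y c.2)

/-- The chain map `βₙ : C_n(Y → X) → C_n(X, Y)`, `β(u, v) = [u]`, restricted to cycles. -/
def coneBetaZ (n : ℕ) : coneCycles X Y n →ₗ[ℝ] relCycles ℝ X Y n :=
  (LinearMap.fst ℝ (SChain ℝ X (n + 1)) (SChain ℝ ↥Y n)).restrict
    (fun c hc => coneCycles_fst_mem c hc)

/-- The map `H(βₙ) : H_{n+1}(Y → X) → H_{n+1}(X, Y)` induced in homology by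
`β(u, v) = [u]`. -/
def coneBetaH (n : ℕ) : coneHomology X Y n →ₗ[ℝ] relHomology ℝ X Y n := by
  refine Submodule.mapQ _ _ (coneBetaZ n) ?_
  intro x hx
  obtain ⟨d, hd⟩ := hx
  show ((coneBetaZ n) x).1 ∈ relBdries ℝ X Y n
  have hval : (((coneBetaZ n) x : relCycles ℝ X Y n) : SChain ℝ X (n + 1)) = x.1.1 := rfl
  have hx' : (x : ConeChain X Y n) = coneD X Y n d := hd.symm
  have hD : (coneD X Y n d).1
      = bdry ℝ X (n + 1) d.1 + pushChain ℝ (subIncl Y) (n + 1) d.2 := rfl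
  rw [hval, hx', hD]
  exact add_mem (Submodule.mem_sup_left ⟨d.1, rfl⟩)
    (Submodule.mem_sup_right (pushChain_subIncl_mem_chainsIn Y d.2))

/-- Gromov's one-parameter family of seminorms: the seminorm induced on relative homology
`H_{n+1}(X, Y; ℝ)` by the norm `‖c‖₁(θ) = ‖c‖₁ + θ‖∂c‖₁` on singular chains. -/
def l1ThetaHomNorm {X : Type} [TopologicalSpace X] {Y : Set X} {n : ℕ} (θ : ℝ)
    (α : relHomology ℝ X Y n) : ℝ :=
  sInf {r : ℝ | ∃ c : relCycles ℝ X Y n,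
    relHomClass c = α ∧ r = l1 c.1 + θ * l1 (bdry ℝ X n c.1)}

/-- An elementary chain. -/
def sg {X : Type} [TopologicalSpace X] {n : ℕ} (σ : SSimplex X n) (r : ℝ) : SChain ℝ X n :=
  chainEquiv ℝ X n (Finsupp.single σ r)

lemma chain_hom_ext {X : Type} [TopologicalSpace X] {n : ℕ} {M : Type} [AddCommGroup M]
    [Module ℝ M] (f g : SChain ℝ X n →ₗ[ℝ] M) (h : ∀ σ, f (sg σ 1) = g (sg σ 1)) : f = g := by
  have h2 : f.comp (chainEquiv ℝ X n).toLinearMap = g.comp (chainEquiv ℝ X n).toLinearMap := by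
    apply Finsupp.lhom_ext'
    intro σ
    apply LinearMap.ext_ring
    exact h σ
  ext x
  exact LinearMap.congr_fun h2 ((chainEquiv ℝ X n).symm x)

lemma smul_sg {X : Type} [TopologicalSpace X] {n : ℕ} (σ : SSimplex X n) (r s : ℝ) :
    r • sg σ s = sg σ (r * s) := by
  rw [sg, ← map_smul, Finsupp.smul_single, smul_eq_mul]; rfl

lemma bdry_sg {X : Type} [TopologicalSpace X] {n : ℕ} (σ : SSimplex X (n + 1)) (r : ℝ) :
    bdry ℝ X n (sg σ r) = ∑ i : Fin (n + 2), sg (faceOf σ i) (r * (-1 : ℝ) ^ (i : ℕ)) := by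
  have h : bdry ℝ X n (sg σ r) = r • bdryChain ℝ σ := by
    show Finsupp.linearCombination ℝ (bdryChain ℝ) (Finsupp.single σ r) = _
    rw [Finsupp.linearCombination_single]
  rw [h, bdryChain, map_sum, Finset.smul_sum]
  refine Finset.sum_congr rfl fun i _ => ?_
  exact smul_sg _ _ _

lemma push_sg {X X' : Type} [TopologicalSpace X] [TopologicalSpace X'] (f : C(X, X')) {n : ℕ}
    (σ : SSimplex X n) (r : ℝ) : pushChain ℝ f n (sg σ r) = sg (f.comp σ) r := by
  show chainEquiv ℝ X' n (Finsupp.mapDomain _ (Finsupp.single σ r)) = _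
  rw [Finsupp.mapDomain_single]; rfl

lemma bdry_push {X X' : Type} [TopologicalSpace X] [TopologicalSpace X'] (f : C(X, X')) {n : ℕ}
    (c : SChain ℝ X (n + 1)) :
    bdry ℝ X' n (pushChain ℝ f (n + 1) c) = pushChain ℝ f n (bdry ℝ X n c) := by
  have : (bdry ℝ X' n).comp (pushChain ℝ f (n + 1)) = (pushChain ℝ f n).comp (bdry ℝ X n) := by
    apply chain_hom_ext
    intro σ
    simp only [LinearMap.comp_apply, push_sg, bdry_sg, map_sum]
    rfl
  exact LinearMap.congr_fun this c

lemma faceOf_faceOf {X : Type} [TopologicalSpace X] {n : ℕ} (σ : SSimplex X (n + 2))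
    (i : Fin (n + 3)) (j : Fin (n + 2)) :
    faceOf (faceOf σ (i.succAbove j)) (j.predAbove i) = faceOf (faceOf σ i) j := by
  ext x
  show σ (face _ (face _ x)) = σ (face _ (face _ x))
  congr 1
  apply Subtype.ext
  show (i.succAbove j).insertNth (α := fun _ => ℝ) 0
      ((j.predAbove i).insertNth (α := fun _ => ℝ) 0 x.1)
    = i.insertNth (α := fun _ => ℝ) 0 (j.insertNth (α := fun _ => ℝ) 0 x.1)
  funext k
  refine Fin.succAboveCases i ?_ (fun k => ?_) k
  · rw [Fin.insertNth_apply_same]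
    conv_lhs => arg 4; rw [← Fin.succAbove_succAbove_predAbove i j]
    rw [Fin.insertNth_apply_succAbove, Fin.insertNth_apply_same]
  · refine Fin.succAboveCases j ?_ (fun k => ?_) k
    · simp
    · rw [Fin.insertNth_apply_succAbove, Fin.insertNth_apply_succAbove,
        ← Fin.succAbove_succAbove_succAbove_predAbove i j k,
        Fin.insertNth_apply_succAbove, Fin.insertNth_apply_succAbove]

lemma bdry_bdry {X : Type} [TopologicalSpace X] {n : ℕ} (c : SChain ℝ X (n + 2)) :
    bdry ℝ X n (bdry ℝ X (n + 1) c) = 0 := by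
  have : (bdry ℝ X n).comp (bdry ℝ X (n + 1)) = 0 := by
    apply chain_hom_ext
    intro σ
    simp only [LinearMap.comp_apply, bdry_sg, map_sum, LinearMap.zero_apply]
    rw [← Finset.sum_product', Finset.univ_product_univ]
    refine Finset.sum_involution
      (fun p _ => ((p.1.succAbove p.2, p.2.predAbove p.1) : Fin (n + 3) × Fin (n + 2)))
      ?_ ?_ ?_ ?_
    · rintro ⟨i, j⟩ -
      simp only [faceOf_faceOf]
      rw [sg, sg, ← map_add, ← Finsupp.single_add]
      have := Fin.neg_one_pow_succAbove_add_predAbove (R := ℝ) i j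
      rw [pow_add, pow_add] at this
      rw [mul_assoc, mul_assoc, this]
      simp
    · rintro ⟨i, j⟩ - - h
      exact Fin.succAbove_ne i j (congrArg Prod.fst h)
    · intros; exact Finset.mem_univ _
    · rintro ⟨i, j⟩ -
      exact Prod.ext (Fin.succAbove_succAbove_predAbove i j)
        (Fin.predAbove_predAbove_succAbove i j)
  exact LinearMap.congr_fun this c

lemma subIncl_comp_injective {X : Type} [TopologicalSpace X] (Y : Set X) (n : ℕ) :
    Function.Injective (fun σ : SSimplex ↥Y n => (subIncl Y).comp σ) := by
  intro σ τ h
  ext x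
  exact congrArg (fun f : SSimplex X n => f x) h

lemma push_injective {X : Type} [TopologicalSpace X] (Y : Set X) (n : ℕ) :
    Function.Injective (pushChain ℝ (subIncl Y) n) :=
  Finsupp.mapDomain_injective (subIncl_comp_injective Y n)

lemma l1_push {X : Type} [TopologicalSpace X] (Y : Set X) {n : ℕ} (v : SChain ℝ ↥Y n) :
    l1 (pushChain ℝ (subIncl Y) n v) = l1 v :=
  Finsupp.sum_mapDomain_index_inj (s := (chainEquiv ℝ ↥Y n).symm v) (h := fun _ r => |r|)
    (subIncl_comp_injective Y n)

lemma l1_neg {X : Type} [TopologicalSpace X] {n : ℕ} (v : SChain ℝ X n) : l1 (-v) = l1 v := by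
  rw [l1, l1, map_neg, Finsupp.sum_neg_index (fun _ => abs_zero)]
  simp

lemma exists_push {X : Type} [TopologicalSpace X] (Y : Set X) {n : ℕ} (c : SChain ℝ X n)
    (hc : c ∈ chainsIn ℝ X Y n) : ∃ v, pushChain ℝ (subIncl Y) n v = c := by
  obtain ⟨w, hw, rfl⟩ := hc
  have hw' := (Finsupp.mem_supported ℝ w).1 hw
  refine ⟨chainEquiv ℝ ↥Y n (Finsupp.comapDomain _ w (subIncl_comp_injective Y n).injOn), ?_⟩
  refine congrArg (chainEquiv ℝ X n)
    (Finsupp.mapDomain_comapDomain _ (subIncl_comp_injective Y n) w ?_)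
  intro σ hσ
  have h := hw' hσ
  exact ⟨⟨fun x => ⟨σ x, h ⟨x, rfl⟩⟩, by fun_prop⟩, rfl⟩

lemma mem_coneCycles {X : Type} [TopologicalSpace X] {Y : Set X} {n : ℕ} (c : ConeChain X Y n) :
    c ∈ coneCycles X Y n ↔ bdry ℝ X n c.1 + pushChain ℝ (subIncl Y) n c.2 = 0 := by
  cases n with
  | zero => exact Iff.rfl
  | succ m =>
    constructor
    · intro h
      exact congrArg Prod.fst (show coneD X Y m c = 0 from h)
    · intro h
      show coneD X Y m c = 0
      refine Prod.ext h ?_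
      show -(bdry ℝ ↥Y m c.2) = 0
      rw [neg_eq_zero]
      apply push_injective Y m
      rw [map_zero, ← bdry_push]
      have := congrArg (bdry ℝ X m) h
      rwa [map_add, bdry_bdry, zero_add, map_zero] at this

lemma coneBetaH_class {X : Type} [TopologicalSpace X] {Y : Set X} {n : ℕ}
    (c : coneCycles X Y n) : coneBetaH n (coneHomClass c) = relHomClass (coneBetaZ n c) := rfl

lemma coneBetaH_injective {X : Type} [TopologicalSpace X] {Y : Set X} (n : ℕ) :
    Function.Injective (coneBetaH (X := X) (Y := Y) n) := by
  rw [injective_iff_map_eq_zero]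
  intro α
  obtain ⟨c, rfl⟩ := Submodule.Quotient.mk_surjective _ α
  intro h
  have h1 : relHomClass (coneBetaZ n c) = 0 := h
  have h2 : c.1.1 ∈ relBdries ℝ X Y n :=
    (Submodule.Quotient.mk_eq_zero
      ((relBdries ℝ X Y n).comap (relCycles ℝ X Y n).subtype)).1 h1
  obtain ⟨_, ⟨a, rfl⟩, y, hy, hay⟩ := Submodule.mem_sup.1 h2
  obtain ⟨b, rfl⟩ := exists_push Y y hy
  refine (Submodule.Quotient.mk_eq_zero _).2 ?_
  refine ⟨(a, b), Prod.ext hay ?_⟩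
  show -(bdry ℝ ↥Y n b) = c.1.2
  apply push_injective Y n
  have hc := (mem_coneCycles c.1).1 c.2
  rw [← hay, map_add, bdry_bdry, zero_add, bdry_push] at hc
  rw [map_neg]
  exact (eq_neg_of_add_eq_zero_right hc).symm

lemma exists_lift {X : Type} [TopologicalSpace X] {Y : Set X} {n : ℕ}
    (u : relCycles ℝ X Y n) : ∃ c : coneCycles X Y n, coneBetaZ n c = u := by
  obtain ⟨v, hv⟩ := exists_push Y (bdry ℝ X n u.1) u.2
  refine ⟨⟨(u.1, -v), (mem_coneCycles _).2 ?_⟩, rfl⟩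
  show bdry ℝ X n u.1 + pushChain ℝ (subIncl Y) n (-v) = 0
  rw [map_neg, hv, add_neg_cancel]

lemma l1_snd {X : Type} [TopologicalSpace X] {Y : Set X} {n : ℕ}
    (c : coneCycles X Y n) : l1 (bdry ℝ X n c.1.1) = l1 c.1.2 := by
  rw [eq_neg_of_add_eq_zero_left ((mem_coneCycles c.1).1 c.2), l1_neg, l1_push]

/-- **The mapping cone computes the Gromov seminorms on relative homology.**
For any pair of spaces `(X, Y)`, any `θ ∈ [0, ∞)` and any degree `n + 1 ≥ 1`, the map
`H(β) : H_{n+1}(Y → X) → H_{n+1}(X, Y)` induced by the chain map `β(u, v) = [u]` is an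
isometric isomorphism with respect to the seminorms induced by
`‖(u, v)‖₁(θ) = ‖u‖₁ + θ‖v‖₁` on the mapping cone and by `‖c‖₁(θ) = ‖c‖₁ + θ‖∂c‖₁` on
relative chains. -/
theorem coneBetaH_isometric_isomorphism
    (X : Type) [TopologicalSpace X] (Y : Set X)
    (θ : ℝ) (hθ : 0 ≤ θ) (n : ℕ) :
    Function.Bijective (coneBetaH (X := X) (Y := Y) n) ∧
    ∀ α : coneHomology X Y n, l1ThetaHomNorm θ (coneBetaH n α) = coneThetaNorm θ α := by
  refine ⟨⟨coneBetaH_injective n, ?_⟩, ?_⟩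
  · intro γ
    obtain ⟨u, rfl⟩ := Submodule.Quotient.mk_surjective _ γ
    obtain ⟨c, rfl⟩ := exists_lift u
    exact ⟨coneHomClass c, rfl⟩
  · intro α
    unfold l1ThetaHomNorm coneThetaNorm
    congr 1
    ext r
    constructor
    · rintro ⟨u, hu, rfl⟩
      obtain ⟨c, rfl⟩ := exists_lift u
      refine ⟨c, coneBetaH_injective n hu, ?_⟩
      rw [← l1_snd c]
      rfl
    · rintro ⟨c, rfl, rfl⟩
      refine ⟨coneBetaZ n c, rfl, ?_⟩
      rw [← l1_snd c]
      rfl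

end BddCoh
end
end

section
/- Let (C_•, d_•) be a normed chain complex of real normed vector spaces with norms ‖·‖_C, and let (D^•, d^•) be its dual normed chain complex, where D^n is the topological dual of C_n with the dual norm ‖·‖_D and d^{n−1} is the adjoint of d_n. Then for every homology class α ∈ H_n(C_•), the seminorm of α satisfies ‖α‖_C = max { ⟨β,α⟩ : β ∈ H_b^n(D^•), ‖β‖_D ≤ 1 }, where ⟨·,·⟩ is the Kronecker product induced by the duality pairing and the maximum is attained. -/
noncomputable section

namespace NormedChainDuality

variable (C : ℕ → Type) [∀ n, NormedAddCommGroup (C n)] [∀ n, NormedSpace ℝ (C n)]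
variable (d : ∀ n : ℕ, C (n + 1) →L[ℝ] C n)

/-- The topological dual of the degree-`n` part, with the operator (dual) norm. -/
abbrev D (n : ℕ) : Type := C n →L[ℝ] ℝ

/-- The dual differential `dⁿ : Dⁿ → Dⁿ⁺¹`, the adjoint of `d_{n+1}`. -/
def dualD (n : ℕ) : D C n →ₗ[ℝ] D C (n + 1) where
  toFun b := b.comp (d n)
  map_add' b b' := by ext x; simp
  map_smul' r b := by ext x; simp

/-- Cycles of the normed chain complex (in degree 0, every chain is a cycle). -/
def cyc : ∀ n : ℕ, Submodule ℝ (C n)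
  | 0 => ⊤
  | (m + 1) => LinearMap.ker (d m : C (m + 1) →ₗ[ℝ] C m)

/-- The homology of the normed chain complex. -/
def Hom (n : ℕ) := cyc C d n ⧸ ((LinearMap.range (d n : C (n + 1) →ₗ[ℝ] C n)).comap (cyc C d n).subtype)

instance (n : ℕ) : AddCommGroup (Hom C d n) := Submodule.Quotient.addCommGroup _
instance (n : ℕ) : Module ℝ (Hom C d n) := Submodule.Quotient.module _

/-- The homology class of a cycle. -/
def homClass {n : ℕ} (c : cyc C d n) : Hom C d n := Submodule.Quotient.mk c

/-- The quotient seminorm on homology. -/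
def homNorm {n : ℕ} (α : Hom C d n) : ℝ :=
  sInf {r : ℝ | ∃ c : cyc C d n, homClass C d c = α ∧ r = ‖(c : C n)‖}

/-- Cocycles of the dual normed chain complex. -/
def coc (n : ℕ) : Submodule ℝ (D C n) := LinearMap.ker (dualD C d n)

/-- Coboundaries of the dual normed chain complex. -/
def cob : ∀ n : ℕ, Submodule ℝ (D C n)
  | 0 => ⊥
  | (m + 1) => LinearMap.range (dualD C d m)

set_option maxSynthPendingDepth 3

/-- The (bounded) cohomology of the dual normed chain complex. -/
def Coh (n : ℕ) := coc C d n ⧸ ((cob C d n).comap (coc C d n).subtype)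

instance (n : ℕ) : AddCommGroup (Coh C d n) := Submodule.Quotient.addCommGroup _
instance (n : ℕ) : Module ℝ (Coh C d n) := Submodule.Quotient.module _

/-- The cohomology class of a cocycle. -/
def cohClass {n : ℕ} (b : coc C d n) : Coh C d n := Submodule.Quotient.mk b

/-- The quotient seminorm (of the dual norm) on the cohomology of the dual complex. -/
def cohNorm {n : ℕ} (β : Coh C d n) : ℝ :=
  sInf {r : ℝ | ∃ b : coc C d n, cohClass C d b = β ∧ r = ‖(b : D C n)‖}

/-- The Kronecker product `⟨·,·⟩ : H_b^n(D) × H_n(C) → ℝ`, induced by the duality pairing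
(evaluation of cochains on chains); it is well defined on (co)homology classes since
cocycles vanish on boundaries and coboundaries vanish on cycles, so its value may be
computed on arbitrary representatives. -/
def kron {n : ℕ} (β : Coh C d n) (α : Hom C d n) : ℝ :=
  ((Quotient.out β : coc C d n) : D C n) ((Quotient.out α : cyc C d n) : C n)

theorem coc_apply_range {n : ℕ} (b : coc C d n) (x : C (n + 1)) : (b : D C n) (d n x) = 0 := by
  have h : dualD C d n b = 0 := b.2
  exact congrArg (fun f : D C (n + 1) => f x) h

theorem cob_apply_cyc {n : ℕ} (b : D C n) (hb : b ∈ cob C d n) (c : cyc C d n) :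
    b (c : C n) = 0 := by
  cases n with
  | zero =>
    have h : b = 0 := hb
    simp [h]
  | succ m =>
    obtain ⟨a, rfl⟩ := hb
    have hc : d m (c : C (m + 1)) = 0 := c.2
    change a (d m (c : C (m + 1))) = 0
    rw [hc, map_zero]

theorem kron_class {n : ℕ} (b : coc C d n) (c : cyc C d n) :
    kron C d (cohClass C d b) (homClass C d c) = (b : D C n) (c : C n) := by
  unfold kron
  set b' : coc C d n := Quotient.out (cohClass C d b) with hb'
  set c' : cyc C d n := Quotient.out (homClass C d c) with hc'
  have h1 : cohClass C d b' = cohClass C d b := Quotient.out_eq _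
  have h2 : homClass C d c' = homClass C d c := Quotient.out_eq _
  have h1' := (Submodule.Quotient.eq _).1 h1
  have h2' := (Submodule.Quotient.eq _).1 h2
  have e1 : ((b' : D C n) - (b : D C n)) (c' : C n) = 0 := cob_apply_cyc C d _ h1' c'
  obtain ⟨x, hx⟩ := h2'
  have hx' : d n x = (c' : C n) - (c : C n) := hx
  have e2 := coc_apply_range C d b x
  rw [hx', map_sub] at e2
  rw [ContinuousLinearMap.sub_apply] at e1
  linarith

theorem range_le_cyc (hdd : ∀ (n : ℕ) (x : C (n + 2)), d n (d (n + 1) x) = 0)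
    (n : ℕ) (x : C (n + 1)) : d n x ∈ cyc C d n := by
  cases n with
  | zero => exact Submodule.mem_top
  | succ m => exact hdd m x

theorem homNorm_class (hdd : ∀ (n : ℕ) (x : C (n + 2)), d n (d (n + 1) x) = 0)
    {n : ℕ} (c : cyc C d n) :
    homNorm C d (homClass C d c) ≤
      ‖(Submodule.Quotient.mk (c : C n) :
        C n ⧸ LinearMap.range (d n : C (n + 1) →ₗ[ℝ] C n))‖ := by
  refine le_of_forall_pos_le_add fun ε hε => ?_
  obtain ⟨m, hm, hlt⟩ := Submodule.Quotient.norm_mk_lt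
    (Submodule.Quotient.mk (c : C n) : C n ⧸ LinearMap.range (d n : C (n + 1) →ₗ[ℝ] C n)) hε
  refine le_trans ?_ hlt.le
  have hr := (Submodule.Quotient.eq _).1 hm
  have hmc : m ∈ cyc C d n := by
    obtain ⟨x, hx⟩ := hr
    have hx' : d n x = m - (c : C n) := hx
    have := (cyc C d n).add_mem (range_le_cyc C d hdd n x) c.2
    rwa [hx', sub_add_cancel] at this
  refine csInf_le ⟨0, ?_⟩ ⟨⟨m, hmc⟩, ?_, rfl⟩
  · rintro r ⟨c, -, rfl⟩
    exact norm_nonneg _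
  · exact (Submodule.Quotient.eq _).2 hr

theorem kron_le_homNorm {n : ℕ} (β : Coh C d n) (α : Hom C d n) (hβ : cohNorm C d β ≤ 1) :
    kron C d β α ≤ homNorm C d α := by
  have hb0 : cohClass C d (Quotient.out β : coc C d n) = β := Quotient.out_eq _
  have hc0 : homClass C d (Quotient.out α : cyc C d n) = α := Quotient.out_eq _
  refine le_csInf ⟨_, _, hc0, rfl⟩ ?_
  rintro r ⟨c, hc, rfl⟩
  have key : ∀ ε > 0, kron C d β α ≤ (1 + ε) * ‖(c : C n)‖ := by
    intro ε hε
    have hlt : cohNorm C d β < 1 + ε := by linarith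
    obtain ⟨r, ⟨b, hb, rfl⟩, hr⟩ := exists_lt_of_csInf_lt (by exact ⟨_, _, hb0, rfl⟩) hlt
    rw [← hb, ← hc, kron_class]
    calc (b : D C n) (c : C n) ≤ ‖(b : D C n) (c : C n)‖ := Real.le_norm_self _
      _ ≤ ‖(b : D C n)‖ * ‖(c : C n)‖ := ContinuousLinearMap.le_opNorm _ _
      _ ≤ _ := by gcongr
  have ht : Filter.Tendsto (fun ε : ℝ => (1 + ε) * ‖(c : C n)‖) (nhdsWithin 0 (Set.Ioi 0))
      (nhds ((1 + 0) * ‖(c : C n)‖)) :=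
    (Continuous.tendsto (by fun_prop) 0).mono_left nhdsWithin_le_nhds
  rw [add_zero, one_mul] at ht
  exact ge_of_tendsto ht (Filter.eventually_of_mem self_mem_nhdsWithin key)

/-- **Duality principle for seminorms on normed chain complexes.**
Let `(C_•, d_•)` be a normed chain complex of real normed vector spaces with dual normed
chain complex `(D^•, d^•)`. Then for every homology class `α ∈ H_n(C_•)`, the quotient
seminorm of `α` satisfies `‖α‖_C = max {⟨β, α⟩ : β ∈ H_b^n(D^•), ‖β‖_D ≤ 1}`; in
particular the maximum is attained. -/
theorem homNorm_eq_max_kron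
    (hdd : ∀ (n : ℕ) (x : C (n + 2)), d n (d (n + 1) x) = 0)
    (n : ℕ) (α : Hom C d n) :
    ∃ β : Coh C d n, cohNorm C d β ≤ 1 ∧ kron C d β α = homNorm C d α ∧
      ∀ β' : Coh C d n, cohNorm C d β' ≤ 1 → kron C d β' α ≤ homNorm C d α := by
  obtain ⟨c, hc⟩ : ∃ c : cyc C d n, homClass C d c = α := ⟨Quotient.out α, Quotient.out_eq _⟩
  obtain ⟨g, hg1, hg2⟩ := exists_dual_vector'' ℝ
    (Submodule.Quotient.mk (c : C n) : C n ⧸ LinearMap.range (d n : C (n + 1) →ₗ[ℝ] C n))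
  let f : C n →ₗ[ℝ] ℝ :=
    (g : (C n ⧸ LinearMap.range (d n : C (n + 1) →ₗ[ℝ] C n)) →ₗ[ℝ] ℝ).comp
      (Submodule.mkQ (LinearMap.range (d n : C (n + 1) →ₗ[ℝ] C n)))
  have hf : ∀ x, ‖f x‖ ≤ 1 * ‖x‖ := fun x =>
    calc ‖f x‖ ≤ ‖g‖ * ‖(Submodule.Quotient.mk x :
            C n ⧸ LinearMap.range (d n : C (n + 1) →ₗ[ℝ] C n))‖ := g.le_opNorm _
      _ ≤ 1 * ‖x‖ := by
        gcongr
        exact Submodule.Quotient.norm_mk_le _ x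
  let F : D C n := f.mkContinuous 1 hf
  have hF : F ∈ coc C d n := by
    change dualD C d n F = 0
    ext x
    change g (Submodule.Quotient.mk (d n x)) = 0
    have h0 : (Submodule.Quotient.mk (d n x) :
        C n ⧸ LinearMap.range (d n : C (n + 1) →ₗ[ℝ] C n)) = 0 :=
      (Submodule.Quotient.mk_eq_zero _).2 ⟨x, rfl⟩
    rw [h0, map_zero]
  have hn : cohNorm C d (cohClass C d ⟨F, hF⟩) ≤ 1 := by
    refine le_trans (csInf_le ⟨0, ?_⟩ ⟨⟨F, hF⟩, rfl, rfl⟩)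
      (LinearMap.mkContinuous_norm_le f zero_le_one hf)
    rintro r ⟨b, -, rfl⟩
    exact norm_nonneg _
  refine ⟨cohClass C d ⟨F, hF⟩, hn, le_antisymm (kron_le_homNorm C d _ _ hn) ?_,
    fun β' h => kron_le_homNorm C d β' α h⟩
  rw [← hc, kron_class]
  refine (homNorm_class C d hdd c).trans (le_of_eq ?_)
  exact hg2.symm

end NormedChainDuality
end
end
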